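/- Let d ≥ 7 be an odd integer and let p be a prime with p ≥ d^2 and p ≡ ±2 (mod d^2 - 3d + 3). Let R_p = k[x,y,z]/(x^{d-1}y + y^{d-1}z + z^{d-1}x) over an algebraically closed field k of characteristic p, with graded maximal ideal m = (x, y, z). Then the F-threshold c^m(m) = (3pd + d^2 - 9d + 15)/(2pd); in particular, in lowest terms the denominator of c^m(m) is divisible by p but need not be a power of p. -/

import Mathlib

/-!
Write `e = d - 1`, `N = e² - e + 1 = d² - 3d + 3` and `h = A + B + D` with `A = x^e y`, `B = y^e z`,
`D = z^e x`. For `q = p^(j+1)` the number `ν(q)` is the largest `r` such that some monomial of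
degree `r` lies outside `(x^q, y^q, z^q, h)`, and it is computed up to a bounded error.

*Reduction to two variables.* To the exponent vector `v` attach the weights `a = e v₀ + v₁`,
`b = e v₁ + v₂`, `c = e v₂ + v₀`. Multiplying a monomial by `A`, `B` or `D` has the same effect on
the weights modulo `N`, and the three effects differ by `N` in one weight. Hence the linear map
`Phi`, which sends a monomial to `s^⌊a/N⌋ t^⌊b/N⌋ u^⌊c/N⌋` in `k[s, t, u]/(s + t + u)`, kills the
multiples of `h` (`Phi_mul_triv`), and on polynomials of one degree with fixed weights modulo `N`
its kernel is exactly the multiples of `h` (`triv_dvd_of_Phi_eq_zero`). Multiples of `x^q`, `y^q`,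
`z^q` go to multiples of `s^i u^q₁`, `t^i s^q₁`, `u^i t^q₁`, where `i = ⌊eq/N⌋` and `q₁ = ⌊q/N⌋`, so
everything depends on the syzygies of these three binary forms. Binary forms are dehomogenized
throughout: `s = X`, `t = 1`, `u = linU = -(1 + X)`, so that a power of `t` appears as a drop in
degree.

*The basic syzygy.* The congruence gives `p ∓ 2 = m N`, and `n = m (e - 1) = 2t + 1` is odd with
`n + t < p` (`exists_params`). By a dimension count `s^n, t^n, u^n` have a syzygy with entries of
degree `t`, and the Mason–Stothers theorem, available because `n + t < p`, shows that it is as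
nondegenerate as possible (`exists_basicSyzygy`). Its `w`-th power, `w = p^j`, is a syzygy of
`s^(nw), t^(nw), u^(nw)`, where `nw = (e - 1)(q ∓ 2w)/N` is close to `i - q₁ ≈ (e - 1) q/N`; this
discrepancy is what produces the second order term of `ν`.

*Lower bound.* The `w`-th power of the basic syzygy gives many syzygies of the three forms, so they
cannot generate all forms of a degree that is too small (`BasicSyzygy.le_of_surjective`); if all
monomials of degree `N λ` were in `(x^q, y^q, z^q, h)`, they would (`BasicSyzygy.lower_bound`).

*Upper bound.* In small degree a relation between multiples of the three forms must be a multiple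
of the `w`-th power of the basic syzygy, and then it is zero (`BasicSyzygy.rigid`). By Macaulay
duality in `k[x, y, z]/(x^q, y^q, z^q)` this implies that monomials of large degree lie in
`(x^q, y^q, z^q, h)` (`BasicSyzygy.upper_bound`).

The two bounds agree up to a constant: `2 d ν(q) = 3 d q + (d² - 9d + 15) w + O(1)`
(`exists_nu_bounds`), which gives the limit. Since `0 < d² - 9d + 15 < p`, the factor `p` of the
denominator does not cancel.
-/

/-! Common definitions: F-thresholds. -/

open Filter

/-- The Frobenius bracket power `J^{[q]}`. -/
def frobeniusPower {R : Type*} [CommRing R] (J : Ideal R) (q : ℕ) : Ideal R :=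
  Ideal.span ((fun x => x ^ q) '' (J : Set R))

/-- `ν_I^J(q) = max { r | I^r ⊄ J^{[q]} }`. -/
noncomputable def fthresholdNu {R : Type*} [CommRing R] (I J : Ideal R) (q : ℕ) : ℕ :=
  sSup {r : ℕ | ¬ I ^ r ≤ frobeniusPower J q}

/-- `c` is the `F`-threshold `c^J(I) = lim_{e → ∞} ν_I^J(p^e)/p^e`. -/
def HasFThreshold {R : Type*} [CommRing R] (p : ℕ) (I J : Ideal R) (c : ℝ) : Prop :=
  Filter.Tendsto (fun e : ℕ => (fthresholdNu I J (p ^ e) : ℝ) / (p : ℝ) ^ e)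
    Filter.atTop (nhds c)


open MvPolynomial in
/-- The polynomial `h = x^{d-1} y + y^{d-1} z + z^{d-1} x`. -/
noncomputable def trivediPolynomial (d : ℕ) (k : Type) [Field k] :
    MvPolynomial (Fin 3) k :=
  X 0 ^ (d - 1) * X 1 + X 1 ^ (d - 1) * X 2 + X 2 ^ (d - 1) * X 0

/-- The ring `R_p = k[x,y,z]/(x^{d-1} y + y^{d-1} z + z^{d-1} x)`. -/
def TrivediRing (d : ℕ) (k : Type) [Field k] : Type :=
  MvPolynomial (Fin 3) k ⧸ Ideal.span {trivediPolynomial d k}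

noncomputable instance (d : ℕ) (k : Type) [Field k] : CommRing (TrivediRing d k) :=
  Ideal.Quotient.commRing _

/-- The graded maximal ideal `𝐦 = (x, y, z)` of `R_p`. -/
noncomputable def trivediMaxIdeal (d : ℕ) (k : Type) [Field k] :
    Ideal (TrivediRing d k) :=
  Ideal.span (Set.range fun i : Fin 3 =>
    Ideal.Quotient.mk (Ideal.span {trivediPolynomial d k}) (MvPolynomial.X i))

namespace Trivedi
open Polynomial

/-! ### The Mason–Stothers bound -/

/-- The linear form `u = -(s + t)`, dehomogenized by `s = X` and `t = 1`. -/
noncomputable def linU (k : Type) [Field k] : k[X] := -(1 + X)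

section
variable {k : Type} [Field k]

lemma linU_eq : linU k = C (-1) * (X - C (-1)) := by
  simp [linU]; ring

lemma linU_ne_zero : linU k ≠ 0 := by
  rw [linU_eq]; exact mul_ne_zero (by simp) (X_sub_C_ne_zero _)

lemma natDegree_linU : (linU k).natDegree = 1 := by
  rw [linU_eq, natDegree_C_mul (by simp), natDegree_X_sub_C]

lemma X_add_one_add_linU : (X : k[X]) + 1 + linU k = 0 := by
  simp [linU]; ring

lemma isCoprime_X_linU : IsCoprime (X : k[X]) (linU k) :=
  ⟨-1, -1, by simp [linU]⟩

lemma linU_prime : Prime (linU k) := by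
  have : Associated (X - C (-1)) (linU k) := by
    rw [linU_eq, mul_comm]
    exact ⟨(isUnit_C.2 (by simp : IsUnit (-1 : k))).unit, rfl⟩
  exact this.prime (prime_X_sub_C _)

lemma isCoprime_linU_of_not_dvd {f : k[X]} (h : ¬ linU k ∣ f) : IsCoprime (linU k) f :=
  (linU_prime.irreducible.coprime_iff_not_dvd).2 h

lemma isCoprime_X_of_not_dvd {f : k[X]} (h : ¬ X ∣ f) : IsCoprime X f :=
  (prime_X.irreducible.coprime_iff_not_dvd).2 h

/-- In characteristic `p`, a polynomial of degree `< p` with zero derivative is constant. -/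
lemma natDegree_eq_zero_of_deriv {p : ℕ} [CharP k p] {h : k[X]} (hd : derivative h = 0)
    (hlt : h.natDegree < p) : h.natDegree = 0 := by
  by_contra hne
  have h1 := congrArg (fun f => coeff f (h.natDegree - 1)) hd
  simp only [coeff_derivative, coeff_zero] at h1
  rw [Nat.sub_add_cancel (Nat.pos_of_ne_zero hne)] at h1
  have h2 : ((h.natDegree : ℕ) : k) = 0 := by
    rcases mul_eq_zero.1 h1 with h3 | h3
    · exfalso; apply hne
      rw [coeff_natDegree, leadingCoeff_eq_zero] at h3
      simp [h3]
    · have : ((h.natDegree - 1 + 1 : ℕ) : k) = 0 := by push_cast; exact h3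
      rwa [Nat.sub_add_cancel (Nat.pos_of_ne_zero hne)] at this
  rw [CharP.cast_eq_zero_iff k p] at h2
  exact absurd (Nat.le_of_dvd (Nat.pos_of_ne_zero hne) h2) (by omega)

open UniqueFactorizationMonoid in
/-- If a prime `π` of degree one divides `h * G` to order `a`, then `h` is divisible by `π` at least
`a - multiplicity π G` times, and all but one of these factors are lost in the radical of `h`. -/
lemma natDegree_radical_add_le [DecidableEq k] {π h G : k[X]} {a : ℕ} (hπ : Prime π)
    (hdeg : π.natDegree = 1) (hh : h ≠ 0) (hG : G ≠ 0) (hdvd : π ^ a ∣ h * G) :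
    (radical h).natDegree + a ≤ h.natDegree + multiplicity π G + 1 ∧
      a ≤ h.natDegree + multiplicity π G := by
  have hfin : FiniteMultiplicity π h := FiniteMultiplicity.of_prime_left hπ hh
  have hfinG : FiniteMultiplicity π G := FiniteMultiplicity.of_prime_left hπ hG
  obtain ⟨h', hh', hnd⟩ := hfin.exists_eq_pow_mul_and_not_dvd
  set m := multiplicity π h with hm
  have hle : a ≤ m + multiplicity π G := by
    have hf : FiniteMultiplicity π (h * G) :=
      FiniteMultiplicity.of_prime_left hπ (mul_ne_zero hh hG)
    have := hf.le_multiplicity_of_pow_dvd hdvd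
    rwa [multiplicity_mul hπ hf] at this
  have h'0 : h' ≠ 0 := by rintro rfl; simp at hh'; exact hh hh'
  have hπ0 := hπ.ne_zero
  have hd : h.natDegree = m + h'.natDegree := by
    conv_lhs => rw [hh']
    rw [natDegree_mul (pow_ne_zero _ hπ0) h'0, natDegree_pow, hdeg, mul_one]
  have hr : (radical h).natDegree ≤ 1 + h'.natDegree := by
    have h1 : radical h ∣ π * h' := by
      have : radical h ∣ radical (π ^ m) * radical h' := by
        conv_lhs => rw [hh']
        exact radical_mul_dvd
      refine this.trans (mul_dvd_mul ?_ radical_dvd_self)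
      exact radical_pow_dvd.trans radical_dvd_self
    have := natDegree_le_of_dvd h1 (mul_ne_zero hπ0 h'0)
    rwa [natDegree_mul hπ0 h'0, hdeg] at this
  exact ⟨by omega, by omega⟩

lemma multiplicity_add_le {G : k[X]} (hG : G ≠ 0) :
    multiplicity X G + multiplicity (linU k) G ≤ G.natDegree := by
  have h1 : (X : k[X]) ^ multiplicity X G * linU k ^ multiplicity (linU k) G ∣ G :=
    (isCoprime_X_linU.pow).mul_dvd (pow_multiplicity_dvd _ _) (pow_multiplicity_dvd _ _)
  have := natDegree_le_of_dvd h1 hG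
  rwa [natDegree_mul (pow_ne_zero _ X_ne_zero) (pow_ne_zero _ linU_ne_zero), natDegree_pow,
    natDegree_pow, natDegree_linU, natDegree_X, mul_one, mul_one] at this

open UniqueFactorizationMonoid in
/-- The Mason–Stothers bound for a relation `f₁ + f₂ + f₃ = 0` between forms of degree `D < p`
divisible by `s^a`, `t^b` and `u^c` respectively, whose greatest common divisor is `G`. After
dehomogenization, divisibility of `f₂` by `t^b` is the degree bound `hD`; the number `T` takes
account of a common factor `t^(D - T)` of `f₁` and `f₃`. -/
lemma mason_bound {p : ℕ} [CharP k p] {f₁ f₂ f₃ G : k[X]} (h1 : f₁ ≠ 0) (h2 : f₂ ≠ 0) (h3 : f₃ ≠ 0)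
    (hsum : f₁ + f₂ + f₃ = 0) {a b c D T : ℕ} (ha : X ^ a ∣ f₁) (hc : linU k ^ c ∣ f₃)
    (hD : f₂.natDegree + b ≤ D) (hT1 : f₁.natDegree ≤ T) (hT3 : f₃.natDegree ≤ T)
    (hTD : T ≤ D) (hp : D < p)
    (hG1 : G ∣ f₁) (hG2 : G ∣ f₂) (hmax : ∀ g, g ∣ f₁ → g ∣ f₂ → g ∣ G) :
    a + b + c + G.natDegree ≤ D + T + 1 := by
  classical
  have hG0 : G ≠ 0 := by rintro rfl; exact h1 (zero_dvd_iff.1 hG1)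
  obtain ⟨g1, e1⟩ := hG1
  obtain ⟨g2, e2⟩ := hG2
  have e3 : f₃ = G * (-(g1 + g2)) := by
    rw [e1, e2] at hsum; linear_combination hsum
  set g3 := -(g1 + g2) with hg3
  have n1 : g1 ≠ 0 := by rintro rfl; simp at e1; exact h1 e1
  have n2 : g2 ≠ 0 := by rintro rfl; simp at e2; exact h2 e2
  have n3 : g3 ≠ 0 := by intro h; rw [h] at e3; simp at e3; exact h3 e3
  have hcop : IsCoprime g1 g2 := by
    refine isCoprime_of_dvd g1 g2 (fun h => n1 h.1) ?_
    intro z hz _ hz1 hz2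
    have : G * z ∣ G := hmax _ (e1 ▸ mul_dvd_mul_left G hz1) (e2 ▸ mul_dvd_mul_left G hz2)
    apply hz
    have h' : G * z ∣ G * 1 := by simpa using this
    exact isUnit_of_dvd_one ((mul_dvd_mul_iff_left hG0).1 h')
  have d1 : f₁.natDegree = G.natDegree + g1.natDegree := by rw [e1, natDegree_mul hG0 n1]
  have d2 : f₂.natDegree = G.natDegree + g2.natDegree := by rw [e2, natDegree_mul hG0 n2]
  have d3 : f₃.natDegree = G.natDegree + g3.natDegree := by rw [e3, natDegree_mul hG0 n3]
  have hmul := multiplicity_add_le hG0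
  have r1 := natDegree_radical_add_le (π := X) (h := g1) (G := G) (a := a) prime_X natDegree_X n1 hG0
    (by rwa [mul_comm, ← e1])
  have r3 := natDegree_radical_add_le (π := linU k) (h := g3) (G := G) (a := c) linU_prime
    natDegree_linU n3 hG0 (by rwa [mul_comm, ← e3])
  have r2 : (radical g2).natDegree ≤ g2.natDegree := natDegree_le_of_dvd radical_dvd_self n2
  rcases Polynomial.abc n1 n2 n3 hcop (by rw [hg3]; ring) with ⟨m1, -, m3⟩ | ⟨z1, z2, z3⟩
  · have hr : (radical (g1 * g2 * g3)).natDegree ≤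
        (radical g1).natDegree + (radical g2).natDegree + (radical g3).natDegree := by
      have : radical (g1 * g2 * g3) ∣ radical g1 * radical g2 * radical g3 :=
        radical_mul_dvd.trans (mul_dvd_mul_right radical_mul_dvd _)
      have h := natDegree_le_of_dvd this
        (mul_ne_zero (mul_ne_zero radical_ne_zero radical_ne_zero) radical_ne_zero)
      rwa [natDegree_mul (mul_ne_zero radical_ne_zero radical_ne_zero) radical_ne_zero,
        natDegree_mul radical_ne_zero radical_ne_zero] at h
    omega
  · have q1 := natDegree_eq_zero_of_deriv (p := p) z1 (by omega)
    have q3 := natDegree_eq_zero_of_deriv (p := p) z3 (by omega)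
    omega

end

/-! ### The basic syzygy -/

section
variable {k : Type} [Field k]

/-- A nonzero syzygy with entries of degree at most `t` exists by counting dimensions: there are
`3 (t + 1)` unknown coefficients and only `n + t + 1 = 3 t + 2` linear conditions. -/
lemma exists_syzygy_aux (n t : ℕ) (hn : n = 2 * t + 1) :
    ∃ P Q R : k[X], X ^ n * P + Q + linU k ^ n * R = 0 ∧ P.natDegree ≤ t ∧ Q.natDegree ≤ t ∧
      R.natDegree ≤ t ∧ ¬ (P = 0 ∧ Q = 0 ∧ R = 0) := by
  let f : (degreeLT k (t + 1) × degreeLT k (t + 1) × degreeLT k (t + 1)) →ₗ[k] k[X] :=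
    (LinearMap.mulLeft k (X ^ n) ∘ₗ (degreeLT k (t + 1)).subtype).coprod
      (((degreeLT k (t + 1)).subtype).coprod
        (LinearMap.mulLeft k (linU k ^ n) ∘ₗ (degreeLT k (t + 1)).subtype))
  have hlt : ∀ g : degreeLT k (t + 1), (g : k[X]).natDegree ≤ t := fun g => by
    have := mem_degreeLT.1 g.2
    by_cases h0 : (g : k[X]) = 0
    · simp [h0]
    · have := (natDegree_lt_iff_degree_lt h0).2 this
      omega
  have hf : ∀ x, f x ∈ degreeLT k (n + t + 1) := by
    rintro ⟨a, b, c⟩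
    rw [mem_degreeLT]
    simp only [f, LinearMap.coprod_apply, LinearMap.comp_apply, Submodule.subtype_apply,
      LinearMap.mulLeft_apply]
    apply lt_of_le_of_lt (degree_le_natDegree)
    norm_cast
    have ha := hlt a
    have hb := hlt b
    have hc := hlt c
    have h1 : (X ^ n * (a : k[X])).natDegree ≤ n + t :=
      natDegree_mul_le_of_le (natDegree_X_pow_le n) ha
    have h2 : (linU k ^ n * (c : k[X])).natDegree ≤ n + t := by
      refine natDegree_mul_le_of_le ?_ hc
      have := natDegree_pow_le_of_le n (natDegree_linU (k := k)).le
      simpa using this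
    have : (X ^ n * (a : k[X]) + ((b : k[X]) + linU k ^ n * (c : k[X]))).natDegree ≤ n + t :=
      natDegree_add_le_of_degree_le h1 (natDegree_add_le_of_degree_le (by omega) h2)
    omega
  have hker : LinearMap.ker (f.codRestrict _ hf) ≠ ⊥ := by
    apply LinearMap.ker_ne_bot_of_finrank_lt
    rw [Module.finrank_prod, Module.finrank_prod]
    simp only [(degreeLTEquiv k _).finrank_eq, Module.finrank_fin_fun]
    omega
  obtain ⟨⟨a, b, c⟩, hx, hx0⟩ := Submodule.exists_mem_ne_zero_of_ne_bot hker
  refine ⟨a, b, c, ?_, hlt a, hlt b, hlt c, ?_⟩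
  · have := congrArg Subtype.val (LinearMap.mem_ker.1 hx)
    simp only [LinearMap.codRestrict_apply, f, LinearMap.coprod_apply, LinearMap.comp_apply,
      Submodule.subtype_apply, LinearMap.mulLeft_apply] at this
    rw [add_assoc]; simpa using this
  · rintro ⟨h1, h2, h3⟩
    apply hx0
    ext1
    · exact Subtype.ext h1
    · ext1
      · exact Subtype.ext h2
      · exact Subtype.ext h3

/-- `(P, Q, R)` is a syzygy of `(s^n, t^n, u^n)`, written at `t = 1`, with entries of degree exactly
`t`, whose terms are coprime and such that none of `P, Q, R` is divisible by the linear form whose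
power it multiplies. For `Q` this last property is `degQ`: as a form of degree `t` it is not
divisible by the linear form set equal to `1`. -/
structure BasicSyzygy (k : Type) [Field k] (n t : ℕ) (P Q R : k[X]) : Prop where
  rel : X ^ n * P + Q + linU k ^ n * R = 0
  degP : P.natDegree = t
  degQ : Q.natDegree = t
  degR : R.natDegree = t
  cop : IsCoprime (X ^ n * P) Q
  XP : IsCoprime X P
  XQ : IsCoprime X Q
  UQ : IsCoprime (linU k) Q
  UR : IsCoprime (linU k) R
  Q0 : Q ≠ 0
  P0 : P ≠ 0
  R0 : R ≠ 0

/-- The syzygy found by the dimension count is nondegenerate: any common factor, any drop in degree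
and any extra factor `s`, `t`, `u` of `P`, `Q`, `R` would contradict `mason_bound`, which is sharp
here because `n = 2 t + 1`. -/
lemma exists_basicSyzygy {p : ℕ} [CharP k p] (n t : ℕ) (hn : n = 2 * t + 1) (hp : n + t < p) :
    ∃ P Q R : k[X], BasicSyzygy k n t P Q R := by
  classical
  obtain ⟨P, Q, R, rel, dP, dQ, dR, hne⟩ := exists_syzygy_aux (k := k) n t hn
  have hU0 := linU_ne_zero (k := k)
  have dXP : ∀ P : k[X], P ≠ 0 → (X ^ n * P).natDegree = n + P.natDegree := fun P h => by
    rw [natDegree_mul (pow_ne_zero _ X_ne_zero) h, natDegree_pow, natDegree_X, mul_one]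
  have dUR : ∀ P : k[X], P ≠ 0 → (linU k ^ n * P).natDegree = n + P.natDegree := fun P h => by
    rw [natDegree_mul (pow_ne_zero _ hU0) h, natDegree_pow, natDegree_linU, mul_one]
  have hR0 : R ≠ 0 := by
    rintro rfl
    have h : X ^ n * P = -Q := by linear_combination rel
    by_cases hP : P = 0
    · subst hP; simp at h; exact hne ⟨rfl, h, rfl⟩
    · have := dXP P hP
      rw [h, natDegree_neg] at this; omega
  have hP0 : P ≠ 0 := by
    rintro rfl
    have h : linU k ^ n * R = -Q := by linear_combination rel
    have := dUR R hR0
    rw [h, natDegree_neg] at this; omega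
  have hQ0 : Q ≠ 0 := by
    rintro rfl
    have h : X ^ n * P = linU k ^ n * (-R) := by linear_combination rel
    have h1 : linU k ^ n ∣ P :=
      (isCoprime_X_linU.pow.symm).dvd_of_dvd_mul_left (Dvd.intro _ h.symm)
    have := natDegree_le_of_dvd h1 hP0
    rw [natDegree_pow, natDegree_linU] at this; omega
  have eqdeg : P.natDegree = R.natDegree := by
    apply le_antisymm
    · have e : X ^ n * P = -Q + -(linU k ^ n * R) := by linear_combination rel
      have := natDegree_add_le_of_degree_le (n := n + R.natDegree) (p := -Q)
        (q := -(linU k ^ n * R)) (by rw [natDegree_neg]; omega)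
        (by rw [natDegree_neg, dUR R hR0])
      rw [← e, dXP P hP0] at this; omega
    · have e : linU k ^ n * R = -Q + -(X ^ n * P) := by linear_combination rel
      have := natDegree_add_le_of_degree_le (n := n + P.natDegree) (p := -Q)
        (q := -(X ^ n * P)) (by rw [natDegree_neg]; omega)
        (by rw [natDegree_neg, dXP P hP0])
      rw [← e, dUR R hR0] at this; omega
  have h1 : X ^ n * P ≠ 0 := mul_ne_zero (pow_ne_zero _ X_ne_zero) hP0
  have h3 : linU k ^ n * R ≠ 0 := mul_ne_zero (pow_ne_zero _ hU0) hR0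
  have key : ∀ a b c : ℕ, X ^ a ∣ X ^ n * P → linU k ^ c ∣ linU k ^ n * R →
      Q.natDegree + b ≤ n + t → a + b + c + (EuclideanDomain.gcd (X ^ n * P) Q).natDegree ≤
        (n + t) + (n + P.natDegree) + 1 := by
    intro a b c ha hc hb
    exact mason_bound (p := p) h1 hQ0 h3 rel ha hc hb (dXP P hP0).le (by rw [dUR R hR0]; omega)
      (by omega) hp (EuclideanDomain.gcd_dvd_left _ _)
      (EuclideanDomain.gcd_dvd_right _ _) (fun g => EuclideanDomain.dvd_gcd)
  -- here `3 n + deg gcd ≤ 2 n + t + deg P + 1` and `deg P ≤ t`, so equality holds throughout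
  have k0 := key n n n (dvd_mul_right _ _) (dvd_mul_right _ _) (by omega)
  have hP : P.natDegree = t := by omega
  have hg0 : EuclideanDomain.gcd (X ^ n * P) Q ≠ 0 := fun h =>
    hQ0 (EuclideanDomain.gcd_eq_zero_iff.1 h).2
  have cop : IsCoprime (X ^ n * P) Q := by
    rw [← EuclideanDomain.gcd_isUnit_iff]
    rw [Polynomial.isUnit_iff_degree_eq_zero, degree_eq_natDegree hg0]
    norm_cast; omega
  have n1 : n ≠ 0 := by omega
  refine ⟨P, Q, R, rel, hP, ?_, by omega, cop, ?_, ?_, ?_, ?_, hQ0, hP0, hR0⟩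
  · by_contra hcon
    have := key n (n + 1) n (dvd_mul_right _ _) (dvd_mul_right _ _) (by omega)
    omega
  · apply isCoprime_X_of_not_dvd
    intro h
    have := key (n + 1) n n (by rw [pow_succ]; exact mul_dvd_mul_left _ h) (dvd_mul_right _ _)
      (by omega)
    omega
  · exact (IsCoprime.pow_left_iff (by omega)).1 (cop.of_mul_left_left)
  · have : IsCoprime (linU k ^ n * R) Q := by
      have h : linU k ^ n * R = -(X ^ n * P) + Q * (-1) := by linear_combination rel
      rw [h]
      exact (cop.neg_left).add_mul_left_left (-1)
    exact (IsCoprime.pow_left_iff (by omega)).1 (this.of_mul_left_left)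
  · apply isCoprime_linU_of_not_dvd
    intro h
    have := key n n (n + 1) (dvd_mul_right _ _) (by rw [pow_succ]; exact mul_dvd_mul_left _ h)
      (by omega)
    omega

end

/-! ### Rigidity of syzygies -/

section
variable {k : Type} [Field k]

lemma pow_sub_dvd_of_dvd_pow_mul {π θ S : k[X]} (hπ : π ≠ 0) (hc : IsCoprime π S) {i n w : ℕ}
    (h : π ^ i ∣ θ * (π ^ n * S) ^ w) : π ^ (i - n * w) ∣ θ := by
  rcases le_total i (n * w) with hi | hi
  · simp [Nat.sub_eq_zero_of_le hi]
  · have h1 : π ^ (n * w) * π ^ (i - n * w) ∣ π ^ (n * w) * (θ * S ^ w) := by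
      rw [← pow_add, Nat.add_sub_cancel' hi]
      convert h using 1
      rw [mul_pow, ← pow_mul]; ring
    exact (hc.pow).dvd_of_dvd_mul_right ((mul_dvd_mul_iff_left (pow_ne_zero _ hπ)).1 h1)

/-- The Frobenius power of the basic syzygy. -/
lemma BasicSyzygy.rel_pow {p n t : ℕ} [Fact p.Prime] [CharP k p] {P Q R : k[X]}
    (hs : BasicSyzygy k n t P Q R) (j : ℕ) :
    (X ^ n * P) ^ p ^ j + Q ^ p ^ j + (linU k ^ n * R) ^ p ^ j = 0 := by
  rw [← add_pow_char_pow, ← add_pow_char_pow, hs.rel,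
    zero_pow (pow_pos (Fact.out : p.Prime).pos _).ne']

/-- A relation `U + V + W = 0` between forms of degree `l` divisible by `s^i₁ u^q₁`, `t^i₁ s^q₁` and
`u^i₁ t^q₁` is trivial when `l` is small. The determinant of `(U, V)` against the `w`-th power of
the basic syzygy is divisible by the `μ`-th powers of `s`, `t` and `u`, with
`μ = min i₁ (q₁ + n w)`, so it vanishes by `hl₂`. Thus `(U, V, W)` is a multiple, by some `θ`, of
the `w`-th power of the basic syzygy; now `θ` is divisible by the `max q₁ (i₁ - n w)`-th powers of
`s`, `t` and `u`, so `θ = 0` by `hl₁`. Divisibility by powers of `t` is expressed by degree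
bounds. -/
lemma BasicSyzygy.rigid {p n t j w : ℕ} [Fact p.Prime] [CharP k p] {P Q R : k[X]}
    (hs : BasicSyzygy k n t P Q R) (hw : w = p ^ j) {U V W : k[X]} (hsum : U + V + W = 0)
    {i₁ q₁ l : ℕ} (hqi : q₁ ≤ i₁)
    (hUX : X ^ i₁ ∣ U) (hUY : linU k ^ q₁ ∣ U)
    (hVX : X ^ q₁ ∣ V) (hVd : V ≠ 0 → V.natDegree + i₁ ≤ l)
    (hWY : linU k ^ i₁ ∣ W) (hWd : W ≠ 0 → W.natDegree + q₁ ≤ l)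
    (hl₁ : l < (n + t) * w + 3 * max q₁ (i₁ - n * w))
    (hl₂ : l + (n + t) * w < 3 * min i₁ (q₁ + n * w)) :
    U = 0 ∧ V = 0 ∧ W = 0 := by
  have hrel := hs.rel_pow (p := p) j
  rw [← hw] at hrel
  have hY0 := linU_ne_zero (k := k)
  have hUd : U ≠ 0 → U.natDegree + q₁ ≤ l := by
    intro hU
    have e : U = -V + -W := by linear_combination hsum
    by_cases hV : V = 0
    · have hW : W ≠ 0 := by rintro rfl; simp [hV] at e; exact hU e
      have := hWd hW
      rw [e, hV]; simpa using this
    · by_cases hW : W = 0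
      · have := hVd hV
        rw [e, hW]; simp; omega
      · have h1 := hVd hV
        have h2 := hWd hW
        have := natDegree_add_le_of_degree_le (n := l - q₁) (p := -V) (q := -W)
          (by rw [natDegree_neg]; omega) (by rw [natDegree_neg]; omega)
        rw [← e] at this; omega
  have dG1 : ((X ^ n * P) ^ w).natDegree = n * w + t * w := by
    rw [natDegree_pow, natDegree_mul (pow_ne_zero _ X_ne_zero) hs.P0, natDegree_pow, natDegree_X,
      hs.degP]; ring
  have dG2 : (Q ^ w).natDegree = t * w := by
    rw [natDegree_pow, hs.degQ]; ring
  have hG1 : (X ^ n * P) ^ w ≠ 0 :=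
    pow_ne_zero _ (mul_ne_zero (pow_ne_zero _ X_ne_zero) hs.P0)
  have hG2 : Q ^ w ≠ 0 := pow_ne_zero _ hs.Q0
  have hdist : (n + t) * w = n * w + t * w := by ring
  rw [hdist] at hl₁ hl₂
  set μ := min i₁ (q₁ + n * w) with hμ
  have hμ1 : μ ≤ i₁ := min_le_left _ _
  have hμ2 : μ ≤ q₁ + n * w := min_le_right _ _
  -- the triple `(U, V, W)` is proportional to the power of the basic syzygy
  have hΩ : U * Q ^ w - V * (X ^ n * P) ^ w = 0 := by
    by_contra hne
    set Ω := U * Q ^ w - V * (X ^ n * P) ^ w with hΩ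
    have hΩ' : Ω = V * (linU k ^ n * R) ^ w - W * Q ^ w := by
      rw [hΩ]; linear_combination Q ^ w * hsum - V * hrel
    have dX : X ^ μ ∣ Ω := by
      refine dvd_sub (((pow_dvd_pow _ hμ1).trans hUX).mul_right _) ?_
      refine (pow_dvd_pow _ hμ2).trans ?_
      rw [pow_add]
      refine mul_dvd_mul hVX ?_
      rw [mul_pow, ← pow_mul]; exact dvd_mul_right _ _
    have dY : linU k ^ μ ∣ Ω := by
      rw [hΩ']
      refine dvd_sub ?_ (((pow_dvd_pow _ hμ1).trans hWY).mul_right _)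
      refine (pow_dvd_pow _ hμ2).trans ?_
      rw [pow_add]
      refine mul_dvd_mul ?_ ?_
      · have e : V = -U + -W := by linear_combination hsum
        rw [e]
        exact dvd_add ((dvd_neg).2 hUY) ((dvd_neg).2 ((pow_dvd_pow _ hqi).trans hWY))
      · rw [mul_pow, ← pow_mul]; exact dvd_mul_right _ _
    have hdvd := natDegree_le_of_dvd ((isCoprime_X_linU.pow).mul_dvd dX dY) hne
    rw [natDegree_mul (pow_ne_zero _ X_ne_zero) (pow_ne_zero _ hY0), natDegree_pow, natDegree_pow,
      natDegree_X, natDegree_linU, mul_one] at hdvd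
    have b1 : (U * Q ^ w).natDegree ≤ l + t * w - q₁ := by
      by_cases hU : U = 0
      · simp [hU]
      · rw [natDegree_mul hU hG2, dG2]; have := hUd hU; omega
    have b2 : (V * (X ^ n * P) ^ w).natDegree ≤ l + n * w + t * w - i₁ := by
      by_cases hV : V = 0
      · simp [hV]
      · rw [natDegree_mul hV hG1, dG1]; have := hVd hV; omega
    have b3 := natDegree_sub_le (U * Q ^ w) (V * (X ^ n * P) ^ w)
    rw [← hΩ] at b3
    omega
  have hcop : IsCoprime ((X ^ n * P) ^ w) (Q ^ w) := hs.cop.pow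
  obtain ⟨θ, hθ⟩ : (X ^ n * P) ^ w ∣ U :=
    hcop.dvd_of_dvd_mul_right ⟨V, by linear_combination hΩ⟩
  have hV : V = θ * Q ^ w := by
    apply mul_right_cancel₀ hG1
    rw [hθ] at hΩ; linear_combination -hΩ
  have hW : W = θ * (linU k ^ n * R) ^ w := by
    rw [hθ, hV] at hsum; linear_combination hsum - θ * hrel
  have hU : U = θ * (X ^ n * P) ^ w := by rw [hθ]; ring
  suffices h0 : θ = 0 by simp [hU, hV, hW, h0]
  by_contra hne
  have x1 : X ^ q₁ ∣ θ := (hs.XQ.pow).dvd_of_dvd_mul_right (hV ▸ hVX)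
  have x2 : X ^ (i₁ - n * w) ∣ θ := pow_sub_dvd_of_dvd_pow_mul X_ne_zero hs.XP (hU ▸ hUX)
  have y1 : linU k ^ q₁ ∣ θ := by
    have h1 : linU k ^ q₁ ∣ θ * Q ^ w := by
      rw [← hV, show V = -U + -W by linear_combination hsum]
      exact dvd_add ((dvd_neg).2 hUY) ((dvd_neg).2 ((pow_dvd_pow _ hqi).trans hWY))
    exact (hs.UQ.pow).dvd_of_dvd_mul_right h1
  have y2 : linU k ^ (i₁ - n * w) ∣ θ := pow_sub_dvd_of_dvd_pow_mul hY0 hs.UR (hW ▸ hWY)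
  set M := max q₁ (i₁ - n * w) with hM
  have x3 : X ^ M ∣ θ := by rcases max_choice q₁ (i₁ - n * w) with h | h <;> rw [hM, h] <;> assumption
  have y3 : linU k ^ M ∣ θ := by
    rcases max_choice q₁ (i₁ - n * w) with h | h <;> rw [hM, h] <;> assumption
  have hdvd := natDegree_le_of_dvd ((isCoprime_X_linU.pow).mul_dvd x3 y3) hne
  rw [natDegree_mul (pow_ne_zero _ X_ne_zero) (pow_ne_zero _ hY0), natDegree_pow, natDegree_pow,
      natDegree_X, natDegree_linU, mul_one] at hdvd
  have u1 := hUd (by rw [hU]; exact mul_ne_zero hne hG1)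
  have v1 := hVd (by rw [hV]; exact mul_ne_zero hne hG2)
  rw [hU, natDegree_mul hne hG1, dG1] at u1
  rw [hV, natDegree_mul hne hG2, dG2] at v1
  omega

end

/-! ### Spanning and dimension counts for binary forms -/

section
variable {k : Type} [Field k]

lemma mem_degreeLT_succ {l : ℕ} {g : k[X]} : g ∈ degreeLT k (l + 1) ↔ g.natDegree ≤ l := by
  by_cases h0 : g = 0
  · simp [h0]
  · rw [mem_degreeLT, degree_eq_natDegree h0, Nat.cast_lt, Nat.lt_succ_iff]

/-- The map `(g₁, g₂, g₃) ↦ F₁ g₁ + F₂ g₂ + F₃ g₃` on triples of polynomials of degree `< l`. -/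
noncomputable def combMap (F₁ F₂ F₃ : k[X]) (l : ℕ) :
    (degreeLT k l × degreeLT k l × degreeLT k l) →ₗ[k] k[X] :=
  ((LinearMap.mulLeft k F₁).comp (degreeLT k l).subtype).coprod
    (((LinearMap.mulLeft k F₂).comp (degreeLT k l).subtype).coprod
      ((LinearMap.mulLeft k F₃).comp (degreeLT k l).subtype))

lemma mem_range_combMap {F₁ F₂ F₃ g : k[X]} {l : ℕ} :
    g ∈ LinearMap.range (combMap F₁ F₂ F₃ (l + 1)) ↔
      ∃ g₁ g₂ g₃ : k[X], g₁.natDegree ≤ l ∧ g₂.natDegree ≤ l ∧ g₃.natDegree ≤ l ∧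
        g = F₁ * g₁ + F₂ * g₂ + F₃ * g₃ := by
  constructor
  · rintro ⟨⟨⟨a, ha⟩, ⟨b, hb⟩, ⟨c, hc⟩⟩, rfl⟩
    exact ⟨a, b, c, mem_degreeLT_succ.1 ha, mem_degreeLT_succ.1 hb, mem_degreeLT_succ.1 hc,
      by simp [combMap, add_assoc]⟩
  · rintro ⟨a, b, c, ha, hb, hc, rfl⟩
    exact ⟨⟨⟨a, mem_degreeLT_succ.2 ha⟩, ⟨b, mem_degreeLT_succ.2 hb⟩, ⟨c, mem_degreeLT_succ.2 hc⟩⟩,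
      by simp [combMap, add_assoc]⟩

lemma finrank_degreeLT (l : ℕ) : Module.finrank k (degreeLT k l) = l := by
  rw [(degreeLTEquiv k l).finrank_eq]; simp

instance (l : ℕ) : Module.Finite k (degreeLT k l) :=
  Module.Finite.equiv (degreeLTEquiv k l).symm

/-- One step of the reduction: `V_{M+d} = K₁ V_M + K₂ V_M + K₃ V_M` for the three forms
`K₁ = s^{d-1}u`, `K₂ = t^{d-1}s`, `K₃ = u^{d-1}t` at `t = 1`, where `V_M` is the space of
polynomials of degree at most `M`. Evenness of `d - 1` is used in `u^{d-1} ≡ 1` modulo `s`. -/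
lemma exists_decomp_step {d M : ℕ} (hd : Odd d) (hM : d ≤ M) (g : k[X])
    (hg : g.natDegree ≤ M + d) :
    ∃ g₁ g₂ g₃ : k[X], g₁.natDegree ≤ M ∧ g₂.natDegree ≤ M ∧ g₃.natDegree ≤ M ∧
      g = X ^ (d - 1) * linU k * g₁ + X * g₂ + linU k ^ (d - 1) * g₃ := by
  rw [← mem_range_combMap]
  set H := LinearMap.range (combMap (X ^ (d - 1) * linU k) X (linU k ^ (d - 1)) (M + 1)) with hH
  have hpow : ∀ i ≤ M + d, (X ^ i : k[X]) ∈ H := by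
    intro i
    induction i with
    | zero =>
      intro _
      rw [hH, mem_range_combMap]
      have hev : Even (d - 1) := by obtain ⟨c, rfl⟩ := hd; simp
      have hX : (X : k[X]) ∣ 1 - linU k ^ (d - 1) := by
        rw [X_dvd_iff, coeff_zero_eq_eval_zero]
        simp [linU, hev.neg_pow]
      obtain ⟨g₂, hg₂⟩ := hX
      refine ⟨0, g₂, 1, by simp, ?_, by simp, by linear_combination hg₂⟩
      by_cases h0 : g₂ = 0
      · simp [h0]
      have h1 : (1 - linU k ^ (d - 1)).natDegree ≤ d - 1 := by
        refine (natDegree_sub_le _ _).trans ?_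
        simp [natDegree_linU]
      rw [hg₂, natDegree_mul X_ne_zero h0, natDegree_X] at h1
      omega
    | succ i ih =>
      intro hi
      by_cases hiM : i ≤ M
      · rw [hH, mem_range_combMap]
        exact ⟨0, X ^ i, 0, by simp, by simpa using hiM, by simp, by ring⟩
      · have h1 := ih (by omega)
        have h2 : (X ^ (d - 1) * linU k * X ^ (i - (d - 1)) : k[X]) ∈ H := by
          rw [hH, mem_range_combMap]
          exact ⟨X ^ (i - (d - 1)), 0, 0, by simp; omega, by simp, by simp, by ring⟩
        have e : (X ^ (i + 1) : k[X]) = -(X ^ i) - X ^ (d - 1) * linU k * X ^ (i - (d - 1)) := by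
          have e1 : (X ^ i : k[X]) = X ^ (d - 1) * X ^ (i - (d - 1)) := by
            rw [← pow_add]; congr 1; omega
          rw [show (X ^ (d - 1) * linU k * X ^ (i - (d - 1)) : k[X]) = X ^ i * linU k by
            rw [e1]; ring]
          linear_combination X ^ i * X_add_one_add_linU (k := k)
        rw [e]
        exact H.sub_mem (H.neg_mem h1) h2
  rw [g.as_sum_range' (M + d + 1) (by omega)]
  refine Submodule.sum_mem _ fun i hi => ?_
  rw [← C_mul_X_pow_eq_monomial, ← smul_eq_C_mul]
  exact H.smul_mem _ (hpow i (by have := Finset.mem_range.1 hi; omega))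

/-- Iterating `exists_decomp_step`: all polynomials of degree at most `M + d λ` are spanned by the
multiples `K₁^a K₂^b K₃^c g` with `a + b + c = λ` and `g` of degree at most `M`. -/
lemma mem_of_forall_monomial {d M lam : ℕ} (hd : Odd d) (hM : d ≤ M) (H : Submodule k k[X])
    (hH : ∀ a b c : ℕ, a + b + c = lam → ∀ g : k[X], g.natDegree ≤ M →
      (X ^ (d - 1) * linU k) ^ a * X ^ b * (linU k ^ (d - 1)) ^ c * g ∈ H)
    (g : k[X]) (hg : g.natDegree ≤ M + d * lam) : g ∈ H := by
  have key : ∀ j ≤ lam, ∀ a b c : ℕ, a + b + c + j = lam → ∀ g : k[X], g.natDegree ≤ M + d * j →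
      (X ^ (d - 1) * linU k) ^ a * X ^ b * (linU k ^ (d - 1)) ^ c * g ∈ H := by
    intro j
    induction j with
    | zero => intro _ a b c h g hg; exact hH a b c h g hg
    | succ j ih =>
      intro hj a b c h g hg
      obtain ⟨g₁, g₂, g₃, h₁, h₂, h₃, rfl⟩ := exists_decomp_step (M := M + d * j) hd
        (by omega) g (by rw [add_assoc]; exact hg)
      have e1 := ih (by omega) (a + 1) b c (by omega) g₁ h₁
      have e2 := ih (by omega) a (b + 1) c (by omega) g₂ h₂
      have e3 := ih (by omega) a b (c + 1) (by omega) g₃ h₃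
      convert H.add_mem (H.add_mem e1 e2) e3 using 1
      ring
  simpa using key lam le_rfl 0 0 0 (by omega) g hg

/-- Dimension count: the generators `F₁ = s^{i₁}u^{q₁}`, `F₂ = t^{i₁}s^{q₁}`, `F₃ = u^{i₁}t^{q₁}`
have a syzygy of small degree, built from the basic one, so that they cannot generate all forms
of degree `L` unless `L` is large. -/
lemma BasicSyzygy.le_of_surjective {p n t j w : ℕ} [Fact p.Prime] [CharP k p] {P Q R : k[X]}
    (hs : BasicSyzygy k n t P Q R) (hw : w = p ^ j) {i₁ q₁ L : ℕ} (hL : i₁ + q₁ ≤ L)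
    (hsurj : ∀ g : k[X], g.natDegree ≤ L → g ∈ LinearMap.range
      (combMap (X ^ i₁ * linU k ^ q₁) (X ^ q₁) (linU k ^ i₁) (L - (i₁ + q₁) + 1))) :
    3 * min i₁ (q₁ + n * w) ≤ (n + t) * w + L + 1 := by
  have hrel := hs.rel_pow (p := p) j
  rw [← hw] at hrel
  have hY0 := linU_ne_zero (k := k)
  set T := combMap (X ^ i₁ * linU k ^ q₁) (X ^ q₁) (linU k ^ i₁) (L - (i₁ + q₁) + 1) with hT
  have hrank := T.finrank_range_add_finrank_ker
  rw [Module.finrank_prod, Module.finrank_prod, finrank_degreeLT] at hrank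
  have hrange : L + 1 ≤ Module.finrank k (LinearMap.range T) := by
    have h1 : degreeLT k (L + 1) ≤ LinearMap.range T := fun g hg =>
      hsurj g (mem_degreeLT_succ.1 hg)
    have := Submodule.finrank_mono h1
    rwa [finrank_degreeLT] at this
  -- `a` and `h0` are chosen so that `s^i₁ s^a = s^(q₁ + h0) s^(n w)`, and similarly for `u`: the
  -- `w`-th power of the basic syzygy times `(s t u)^(q₁ + h0)` is then a syzygy of `F₁, F₂, F₃`
  obtain ⟨h0, hh0⟩ : ∃ h0, h0 = i₁ - (q₁ + n * w) := ⟨_, rfl⟩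
  obtain ⟨a, ha⟩ : ∃ a, a = q₁ + h0 + n * w - i₁ := ⟨_, rfl⟩
  have ha' : a + i₁ = q₁ + h0 + n * w := by omega
  have hdist : (n + t) * w = n * w + t * w := by ring
  rcases lt_or_ge L (3 * (q₁ + h0) + (n + t) * w) with hlt | hge
  · omega
  obtain ⟨r, hr⟩ := Nat.exists_eq_add_of_le hge
  have hker : r + 1 ≤ Module.finrank k (LinearMap.ker T) := by
    -- the coefficients of this syzygy; its multiples by polynomials of degree at most `r` fill a
    -- subspace of dimension `r + 1` of the kernel
    let A₁ : k[X] := X ^ a * linU k ^ h0 * P ^ w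
    let A₂ : k[X] := X ^ h0 * linU k ^ (q₁ + h0) * Q ^ w
    let A₃ : k[X] := X ^ (q₁ + h0) * linU k ^ a * R ^ w
    have hX0 : (X : k[X]) ≠ 0 := X_ne_zero
    have dP : (P ^ w).natDegree = t * w := by rw [natDegree_pow, hs.degP, mul_comm]
    have dQ : (Q ^ w).natDegree = t * w := by rw [natDegree_pow, hs.degQ, mul_comm]
    have dR : (R ^ w).natDegree = t * w := by rw [natDegree_pow, hs.degR, mul_comm]
    have d₁ : A₁.natDegree ≤ a + h0 + t * w := by
      refine natDegree_mul_le_of_le (natDegree_mul_le_of_le ?_ ?_) dP.le <;>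
        simp [natDegree_pow, natDegree_linU]
    have d₂ : A₂.natDegree ≤ h0 + (q₁ + h0) + t * w := by
      refine natDegree_mul_le_of_le (natDegree_mul_le_of_le ?_ ?_) dQ.le <;>
        simp [natDegree_pow, natDegree_linU]
    have d₃ : A₃.natDegree ≤ (q₁ + h0) + a + t * w := by
      refine natDegree_mul_le_of_le (natDegree_mul_le_of_le ?_ ?_) dR.le <;>
        simp [natDegree_pow, natDegree_linU]
    have hmem : ∀ (A : k[X]) (δ : ℕ), A.natDegree ≤ δ → r + δ ≤ L - (i₁ + q₁) →
        ∀ ξ : degreeLT k (r + 1), (LinearMap.mulRight k A).comp (degreeLT k (r + 1)).subtype ξ ∈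
          degreeLT k (L - (i₁ + q₁) + 1) := by
      intro A δ hA hδ ξ
      rw [mem_degreeLT_succ]
      exact (natDegree_mul_le_of_le (mem_degreeLT_succ.1 ξ.2) hA).trans hδ
    let Ψ : degreeLT k (r + 1) →ₗ[k] _ :=
      (LinearMap.codRestrict _ _ (hmem A₁ _ d₁ (by omega))).prod
        ((LinearMap.codRestrict _ _ (hmem A₂ _ d₂ (by omega))).prod
          (LinearMap.codRestrict _ _ (hmem A₃ _ d₃ (by omega))))
    have hΨ : ∀ ξ, Ψ ξ ∈ LinearMap.ker T := by
      intro ξ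
      have e1 : X ^ i₁ * linU k ^ q₁ * A₁ + X ^ q₁ * A₂ + linU k ^ i₁ * A₃ = 0 := by
        have c1 : X ^ i₁ * linU k ^ q₁ * A₁ =
            (X * linU k) ^ (q₁ + h0) * (X ^ n * P) ^ w := by
          have : (X ^ a * X ^ i₁ : k[X]) = X ^ (q₁ + h0) * X ^ (n * w) := by
            rw [← pow_add, ha', pow_add]
          simp only [A₁, mul_pow, ← pow_mul]
          rw [pow_add (linU k)]
          linear_combination linU k ^ q₁ * linU k ^ h0 * P ^ w * this
        have c2 : X ^ q₁ * A₂ = (X * linU k) ^ (q₁ + h0) * Q ^ w := by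
          simp only [A₂]; ring
        have c3 : linU k ^ i₁ * A₃ = (X * linU k) ^ (q₁ + h0) * (linU k ^ n * R) ^ w := by
          have : (linU k ^ a * linU k ^ i₁ : k[X]) = linU k ^ (q₁ + h0) * linU k ^ (n * w) := by
            rw [← pow_add, ha', pow_add]
          simp only [A₃, mul_pow, ← pow_mul]
          linear_combination X ^ (q₁ + h0) * R ^ w * this
        rw [c1, c2, c3]
        linear_combination (X * linU k) ^ (q₁ + h0) * hrel
      rw [LinearMap.mem_ker]
      change X ^ i₁ * linU k ^ q₁ * ((ξ : k[X]) * A₁) + (X ^ q₁ * ((ξ : k[X]) * A₂) +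
        linU k ^ i₁ * ((ξ : k[X]) * A₃)) = 0
      linear_combination (ξ : k[X]) * e1
    have hinj : Function.Injective (LinearMap.codRestrict (LinearMap.ker T) Ψ hΨ) := by
      refine (injective_iff_map_eq_zero _).2 fun ξ hξ => ?_
      have h2 : ((Ψ ξ).2.1 : k[X]) = 0 := by
        have h4 : Ψ ξ = 0 := congrArg Subtype.val hξ
        rw [h4]; rfl
      have h3 : (ξ : k[X]) * A₂ = 0 := h2
      have hA₂ : A₂ ≠ 0 := mul_ne_zero (mul_ne_zero (pow_ne_zero _ hX0) (pow_ne_zero _ hY0))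
        (pow_ne_zero _ hs.Q0)
      exact Subtype.ext ((mul_eq_zero.1 h3).resolve_right hA₂)
    have := LinearMap.finrank_le_finrank_of_injective hinj
    rwa [finrank_degreeLT] at this
  omega

end

/-! ### Reduction to binary forms and the lower bound -/

section
variable {k : Type} [Field k]

/-- The polynomial `x^e y + y^e z + z^e x`, that is, `trivediPolynomial (e + 1) k`. -/
noncomputable def triv (e : ℕ) (k : Type) [Field k] : MvPolynomial (Fin 3) k :=
  MvPolynomial.X 0 ^ e * MvPolynomial.X 1 + MvPolynomial.X 1 ^ e * MvPolynomial.X 2 +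
    MvPolynomial.X 2 ^ e * MvPolynomial.X 0

/-- The first of the three weights of an exponent vector. The weights of `x^e y`, `y^e z`, `z^e x`
are `(N + e, e, e)`, `(e, N + e, e)` and `(e, e, N + e)`, where `N = e² - e + 1`. -/
def wa (e : ℕ) (v : Fin 3 →₀ ℕ) : ℕ := e * v 0 + v 1
/-- The second of the three weights of an exponent vector. -/
def wb (e : ℕ) (v : Fin 3 →₀ ℕ) : ℕ := e * v 1 + v 2
/-- The third of the three weights of an exponent vector. -/
def wc (e : ℕ) (v : Fin 3 →₀ ℕ) : ℕ := e * v 2 + v 0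
/-- The total degree of an exponent vector. -/
def tdeg (v : Fin 3 →₀ ℕ) : ℕ := v 0 + v 1 + v 2

lemma wa_add (e : ℕ) (v w : Fin 3 →₀ ℕ) : wa e (v + w) = wa e v + wa e w := by
  simp [wa]; ring
lemma wb_add (e : ℕ) (v w : Fin 3 →₀ ℕ) : wb e (v + w) = wb e v + wb e w := by
  simp [wb]; ring
lemma wc_add (e : ℕ) (v w : Fin 3 →₀ ℕ) : wc e (v + w) = wc e v + wc e w := by
  simp [wc]; ring
lemma tdeg_add (v w : Fin 3 →₀ ℕ) : tdeg (v + w) = tdeg v + tdeg w := by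
  simp [tdeg]; ring
lemma w_sum (e : ℕ) (v : Fin 3 →₀ ℕ) : wa e v + wb e v + wc e v = (e + 1) * tdeg v := by
  simp [wa, wb, wc, tdeg]; ring

/-- The exponent vector of `x^a y^b z^c`. -/
noncomputable def expo (a b c : ℕ) : Fin 3 →₀ ℕ :=
  Finsupp.single 0 a + Finsupp.single 1 b + Finsupp.single 2 c

@[simp] lemma expo_zero (a b c : ℕ) : expo a b c 0 = a := by simp [expo]
@[simp] lemma expo_one (a b c : ℕ) : expo a b c 1 = b := by simp [expo]
@[simp] lemma expo_two (a b c : ℕ) : expo a b c 2 = c := by simp [expo]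

lemma monomial_expo (a b c : ℕ) : MvPolynomial.monomial (expo a b c) (1 : k) =
    MvPolynomial.X 0 ^ a * MvPolynomial.X 1 ^ b * MvPolynomial.X 2 ^ c := by
  simp [expo, MvPolynomial.X_pow_eq_monomial, MvPolynomial.monomial_mul]

lemma expo_self (v : Fin 3 →₀ ℕ) : expo (v 0) (v 1) (v 2) = v := by
  ext i; fin_cases i <;> simp

lemma triv_eq (e : ℕ) : triv e k = MvPolynomial.monomial (expo e 1 0) 1 +
    MvPolynomial.monomial (expo 0 e 1) 1 + MvPolynomial.monomial (expo 1 0 e) 1 := by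
  simp only [monomial_expo, triv]; ring

/-- The value on the monomial with exponent vector `v` of the linear map `Phi`. -/
noncomputable def phi (k : Type) [Field k] (e N r : ℕ) (v : Fin 3 →₀ ℕ) : k[X] :=
  if tdeg v = r then X ^ (wa e v / N) * linU k ^ (wc e v / N) else 0

/-- The linear map from polynomials in `x, y, z` to binary forms (dehomogenized, with `s = X`,
`t = 1`, `u = -(1 + X)`) which sends a monomial of degree `r` with weights `a, b, c` to
`s^⌊a/N⌋ t^⌊b/N⌋ u^⌊c/N⌋` and kills the monomials of other degrees. As `s + t + u = 0`, it kills
the multiples of `triv e k`. -/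
noncomputable def Phi (k : Type) [Field k] (e N r : ℕ) : MvPolynomial (Fin 3) k →ₗ[k] k[X] :=
  (MvPolynomial.basisMonomials (Fin 3) k).constr k (phi k e N r)

lemma Phi_monomial (e N r : ℕ) (v : Fin 3 →₀ ℕ) :
    Phi k e N r (MvPolynomial.monomial v 1) = phi k e N r v := by
  have := (MvPolynomial.basisMonomials (Fin 3) k).constr_basis k (phi k e N r) v
  rwa [MvPolynomial.coe_basisMonomials] at this

lemma monomial_eq_smul (v : Fin 3 →₀ ℕ) (c : k) :
    MvPolynomial.monomial v c = c • MvPolynomial.monomial v (1 : k) := by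
  rw [MvPolynomial.smul_monomial, smul_eq_mul, mul_one]

lemma Phi_monomial' (e N r : ℕ) (v : Fin 3 →₀ ℕ) (c : k) :
    Phi k e N r (MvPolynomial.monomial v c) = c • phi k e N r v := by
  rw [monomial_eq_smul, map_smul, Phi_monomial]

lemma Phi_apply (e N r : ℕ) (f : MvPolynomial (Fin 3) k) :
    Phi k e N r f = ∑ v ∈ f.support, f.coeff v • phi k e N r v := by
  conv_lhs => rw [f.as_sum, map_sum]
  exact Finset.sum_congr rfl fun v _ => Phi_monomial' e N r v _

/-- The three terms of `f * triv e k`, for a monomial `f`, go to the products of one and the same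
form by `s`, `t` and `u`. -/
lemma Phi_mul_triv {e N r : ℕ} (hN : N + e = e * e + 1) (hN0 : 0 < N)
    (f : MvPolynomial (Fin 3) k) : Phi k e N r (f * triv e k) = 0 := by
  induction f using MvPolynomial.induction_on' with
  | add p q hp hq => rw [add_mul, map_add, hp, hq, add_zero]
  | monomial v c =>
    rw [triv_eq, mul_add, mul_add, MvPolynomial.monomial_mul, MvPolynomial.monomial_mul,
      MvPolynomial.monomial_mul, mul_one, map_add, map_add, Phi_monomial', Phi_monomial',
      Phi_monomial']
    have hA : wa e (v + expo e 1 0) = wa e v + e + N := by rw [wa_add]; simp [wa]; omega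
    have hA' : wc e (v + expo e 1 0) = wc e v + e := by rw [wc_add]; simp [wc]
    have hB : wa e (v + expo 0 e 1) = wa e v + e := by rw [wa_add]; simp [wa]
    have hB' : wc e (v + expo 0 e 1) = wc e v + e := by rw [wc_add]; simp [wc]
    have hC : wa e (v + expo 1 0 e) = wa e v + e := by rw [wa_add]; simp [wa]
    have hC' : wc e (v + expo 1 0 e) = wc e v + e + N := by rw [wc_add]; simp [wc]; omega
    have t1 : tdeg (v + expo e 1 0) = tdeg v + (e + 1) := by rw [tdeg_add]; simp [tdeg]
    have t2 : tdeg (v + expo 0 e 1) = tdeg v + (e + 1) := by rw [tdeg_add]; simp [tdeg]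
    have t3 : tdeg (v + expo 1 0 e) = tdeg v + (e + 1) := by rw [tdeg_add]; simp [tdeg]; ring
    simp only [phi, hA, hA', hB, hB', hC, hC', t1, t2, t3, Nat.add_div_right _ hN0]
    split_ifs
    · rw [← smul_add, ← smul_add]
      have : (X : k[X]) ^ ((wa e v + e) / N).succ * linU k ^ ((wc e v + e) / N) +
          X ^ ((wa e v + e) / N) * linU k ^ ((wc e v + e) / N) +
          X ^ ((wa e v + e) / N) * linU k ^ ((wc e v + e) / N).succ = 0 := by
        rw [pow_succ, pow_succ]
        linear_combination X ^ ((wa e v + e) / N) * linU k ^ ((wc e v + e) / N) *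
          X_add_one_add_linU (k := k)
      rw [this, smul_zero]
    · simp

lemma natDegree_XU (a c : ℕ) : (X ^ a * linU k ^ c : k[X]).natDegree = a + c := by
  rw [natDegree_mul (pow_ne_zero _ X_ne_zero) (pow_ne_zero _ linU_ne_zero), natDegree_pow,
    natDegree_pow, natDegree_X, natDegree_linU, mul_one, mul_one]

lemma div_sum_le {e N : ℕ} (v : Fin 3 →₀ ℕ) :
    wa e v / N + wb e v / N + wc e v / N ≤ (e + 1) * tdeg v / N := by
  rw [← w_sum]
  refine le_trans (Nat.add_le_add_right (Nat.div_add_div_le_add_div) _) ?_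
  exact Nat.div_add_div_le_add_div

lemma div_bounds_zero {e N q : ℕ} {v : Fin 3 →₀ ℕ} (h : q ≤ v 0) :
    e * q / N ≤ wa e v / N ∧ q / N ≤ wc e v / N :=
  ⟨Nat.div_le_div_right (by have := Nat.mul_le_mul_left e h; simp only [wa]; omega),
    Nat.div_le_div_right (by simp only [wc]; omega)⟩

lemma div_bounds_one {e N q : ℕ} {v : Fin 3 →₀ ℕ} (h : q ≤ v 1) :
    e * q / N ≤ wb e v / N ∧ q / N ≤ wa e v / N :=
  ⟨Nat.div_le_div_right (by have := Nat.mul_le_mul_left e h; simp only [wb]; omega),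
    Nat.div_le_div_right (by simp only [wa]; omega)⟩

lemma div_bounds_two {e N q : ℕ} {v : Fin 3 →₀ ℕ} (h : q ≤ v 2) :
    e * q / N ≤ wc e v / N ∧ q / N ≤ wb e v / N :=
  ⟨Nat.div_le_div_right (by have := Nat.mul_le_mul_left e h; simp only [wc]; omega),
    Nat.div_le_div_right (by simp only [wb]; omega)⟩

/-- A monomial divisible by `x^q`, `y^q` or `z^q` goes to a multiple of `s^i u^q₁`, `t^i s^q₁` or
`u^i t^q₁`, with `i = ⌊eq/N⌋` and `q₁ = ⌊q/N⌋`. -/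
lemma phi_mem_range {e N q r : ℕ} {v : Fin 3 →₀ ℕ} (hv : q ≤ v 0 ∨ q ≤ v 1 ∨ q ≤ v 2) :
    phi k e N r v ∈ LinearMap.range (combMap (X ^ (e * q / N) * linU k ^ (q / N)) (X ^ (q / N))
      (linU k ^ (e * q / N)) ((e + 1) * r / N - (e * q / N + q / N) + 1)) := by
  by_cases hr : tdeg v = r
  swap
  · rw [phi, if_neg hr]; exact Submodule.zero_mem _
  have hsum := div_sum_le (e := e) (N := N) v
  rw [hr] at hsum
  rw [phi, if_pos hr, mem_range_combMap]
  rcases hv with h | h | h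
  · obtain ⟨h1, h2⟩ := div_bounds_zero (e := e) (N := N) h
    refine ⟨X ^ (wa e v / N - e * q / N) * linU k ^ (wc e v / N - q / N), 0, 0, ?_, by simp,
      by simp, ?_⟩
    · rw [natDegree_XU]
      generalize wa e v / N = A at *
      generalize wb e v / N = B at *
      generalize wc e v / N = D at *
      generalize e * q / N = I at *
      generalize q / N = I' at *
      omega
    · rw [← pow_sub_mul_pow X h1, ← pow_sub_mul_pow (linU k) h2]; ring
  · obtain ⟨h1, h2⟩ := div_bounds_one (e := e) (N := N) h
    refine ⟨0, X ^ (wa e v / N - q / N) * linU k ^ (wc e v / N), 0, by simp, ?_,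
      by simp, ?_⟩
    · rw [natDegree_XU]; omega
    · rw [← pow_sub_mul_pow X h2]; ring
  · obtain ⟨h1, h2⟩ := div_bounds_two (e := e) (N := N) h
    refine ⟨0, 0, X ^ (wa e v / N) * linU k ^ (wc e v / N - e * q / N), by simp, by simp, ?_, ?_⟩
    · rw [natDegree_XU]; omega
    · rw [← pow_sub_mul_pow (linU k) h1]; ring

/-- The ideal `(x^q, y^q, z^q, triv e k)`, the preimage of `𝐦^{[q]}`. -/
noncomputable def Jq (k : Type) [Field k] (e q : ℕ) : Ideal (MvPolynomial (Fin 3) k) :=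
  Ideal.span {MvPolynomial.X 0 ^ q, MvPolynomial.X 1 ^ q, MvPolynomial.X 2 ^ q, triv e k}

lemma mem_Jq {e q : ℕ} {f : MvPolynomial (Fin 3) k} : f ∈ Jq k e q ↔ ∃ a b c g,
    f = a * MvPolynomial.X 0 ^ q + b * MvPolynomial.X 1 ^ q + c * MvPolynomial.X 2 ^ q +
      g * triv e k := by
  constructor
  · intro hf
    rw [Jq, Ideal.mem_span_insert] at hf
    obtain ⟨a, f₁, h1, rfl⟩ := hf
    rw [Ideal.mem_span_insert] at h1
    obtain ⟨b, f₂, h2, rfl⟩ := h1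
    rw [Ideal.mem_span_insert] at h2
    obtain ⟨c, f₃, h3, rfl⟩ := h2
    rw [Ideal.mem_span_singleton'] at h3
    obtain ⟨g, rfl⟩ := h3
    exact ⟨a, b, c, g, by ring⟩
  · rintro ⟨a, b, c, g, rfl⟩
    refine Ideal.add_mem _ (Ideal.add_mem _ (Ideal.add_mem _ ?_ ?_) ?_) ?_ <;>
      exact Ideal.mul_mem_left _ _ (Ideal.subset_span (by simp))

lemma Phi_mul_X_pow_mem {e N q r : ℕ} (i : Fin 3) (f : MvPolynomial (Fin 3) k) :
    Phi k e N r (f * MvPolynomial.X i ^ q) ∈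
      LinearMap.range (combMap (X ^ (e * q / N) * linU k ^ (q / N)) (X ^ (q / N))
      (linU k ^ (e * q / N)) ((e + 1) * r / N - (e * q / N + q / N) + 1)) := by
  induction f using MvPolynomial.induction_on' with
  | add f g hf hg =>
    rw [add_mul f g, map_add]; exact Submodule.add_mem _ hf hg
  | monomial v c =>
    rw [MvPolynomial.X_pow_eq_monomial, MvPolynomial.monomial_mul, mul_one, Phi_monomial']
    refine Submodule.smul_mem _ _ (phi_mem_range ?_)
    fin_cases i <;> simp

lemma Phi_mem_range {e N q r : ℕ} (hN : N + e = e * e + 1) (hN0 : 0 < N)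
    {f : MvPolynomial (Fin 3) k} (hf : f ∈ Jq k e q) : Phi k e N r f ∈
      LinearMap.range (combMap (X ^ (e * q / N) * linU k ^ (q / N)) (X ^ (q / N))
      (linU k ^ (e * q / N)) ((e + 1) * r / N - (e * q / N + q / N) + 1)) := by
  obtain ⟨a, b, c, g, rfl⟩ := mem_Jq.1 hf
  rw [map_add, map_add, map_add, Phi_mul_triv hN hN0, add_zero]
  exact Submodule.add_mem _ (Submodule.add_mem _ (Phi_mul_X_pow_mem _ _) (Phi_mul_X_pow_mem _ _))
    (Phi_mul_X_pow_mem _ _)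

/-- The lower bound for the `F`-threshold: if all monomials of degree `N λ` lie in the ideal
`(x^q, y^q, z^q, h)`, then `λ` is large. Indeed, the monomials `x^(N a) y^(N b) z^(N c)` go to
`K₁^a K₂^b K₃^c` in the notation of `exists_decomp_step`, and their multiples span all forms. -/
lemma BasicSyzygy.lower_bound {p n t j w : ℕ} [Fact p.Prime] [CharP k p] {P Q R : k[X]}
    (hs : BasicSyzygy k n t P Q R) (hw : w = p ^ j) {e N q lam : ℕ} (hN : N + e = e * e + 1)
    (hN0 : 0 < N) (he : Even e) (hlam : e * q / N + q / N ≤ (e + 1) * lam)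
    (h : ∀ v : Fin 3 →₀ ℕ, tdeg v = N * lam → MvPolynomial.monomial v (1 : k) ∈ Jq k e q) :
    3 * min (e * q / N) (q / N + n * w) ≤ (n + t) * w + ((e + 1) * lam + (e + 1)) + 1 := by
  refine hs.le_of_surjective hw (by omega) ?_
  intro g hg
  have hd : Odd (e + 1) := he.add_one
  refine mem_of_forall_monomial (d := e + 1) (M := e + 1) (lam := lam) hd le_rfl _ ?_ g
    (by omega)
  intro a b c habc g hg
  have h1 := Phi_mem_range (r := N * lam) hN hN0
    (h (expo (N * a) (N * b) (N * c)) (by simp [tdeg, ← habc]; ring))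
  have e1 : wa e (expo (N * a) (N * b) (N * c)) / N = e * a + b := by
    rw [show wa e (expo (N * a) (N * b) (N * c)) = N * (e * a + b) by simp [wa]; ring,
      Nat.mul_div_cancel_left _ hN0]
  have e2 : wc e (expo (N * a) (N * b) (N * c)) / N = e * c + a := by
    rw [show wc e (expo (N * a) (N * b) (N * c)) = N * (e * c + a) by simp [wc]; ring,
      Nat.mul_div_cancel_left _ hN0]
  have e3 : (e + 1) * (N * lam) / N = (e + 1) * lam := by
    rw [show (e + 1) * (N * lam) = N * ((e + 1) * lam) by ring, Nat.mul_div_cancel_left _ hN0]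
  rw [Phi_monomial, phi, if_pos (by simp [tdeg, ← habc]; ring), e1, e2, e3, mem_range_combMap] at h1
  obtain ⟨g₁, g₂, g₃, d₁, d₂, d₃, h1⟩ := h1
  rw [mem_range_combMap]
  refine ⟨g₁ * g, g₂ * g, g₃ * g, (natDegree_mul_le_of_le d₁ hg).trans (by omega),
    (natDegree_mul_le_of_le d₂ hg).trans (by omega),
    (natDegree_mul_le_of_le d₃ hg).trans (by omega), ?_⟩
  rw [Nat.add_sub_cancel]
  have : (X ^ e * linU k) ^ a * X ^ b * (linU k ^ e) ^ c = X ^ (e * a + b) * linU k ^ (e * c + a) := by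
    ring
  rw [this, h1]; ring

end

/-! ### The kernel of the reduction -/

section
variable {k : Type} [Field k]

lemma X_not_dvd_triv {e : ℕ} (he : 0 < e) (i : Fin 3) :
    ¬ (MvPolynomial.X i : MvPolynomial (Fin 3) k) ∣ triv e k := by
  intro h
  have h1 := map_dvd (MvPolynomial.eval fun j : Fin 3 => if j = i then (0 : k) else 1) h
  fin_cases i <;> simp [triv, he.ne'] at h1

lemma isRelPrime_X_pow_triv {e : ℕ} (he : 0 < e) (i : Fin 3) (n : ℕ) :
    IsRelPrime ((MvPolynomial.X i : MvPolynomial (Fin 3) k) ^ n) (triv e k) :=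
  ((MvPolynomial.X_prime (R := k) (i := i)).irreducible.isRelPrime_iff_not_dvd.2
    (X_not_dvd_triv he i)).pow_left

lemma isRelPrime_monomial_triv {e : ℕ} (he : 0 < e) (v : Fin 3 →₀ ℕ) :
    IsRelPrime (MvPolynomial.monomial v (1 : k)) (triv e k) := by
  rw [← expo_self v, monomial_expo]
  exact ((isRelPrime_X_pow_triv he _ _).mul_left (isRelPrime_X_pow_triv he _ _)).mul_left
    (isRelPrime_X_pow_triv he _ _)

lemma triv_ne_zero {e : ℕ} (he : 0 < e) : triv e k ≠ 0 := by
  intro h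
  exact X_not_dvd_triv (k := k) he 0 (h ▸ dvd_zero _)

/-- Two exponent vectors have the same degree and the same weights modulo `N`. -/
structure SameClass (e N : ℕ) (v w : Fin 3 →₀ ℕ) : Prop where
  deg : tdeg v = tdeg w
  a : wa e v ≡ wa e w [MOD N]
  b : wb e v ≡ wb e w [MOD N]
  c : wc e v ≡ wc e w [MOD N]

lemma SameClass.refl (e N : ℕ) (v : Fin 3 →₀ ℕ) : SameClass e N v v :=
  ⟨rfl, Nat.ModEq.refl _, Nat.ModEq.refl _, Nat.ModEq.refl _⟩

lemma SameClass.symm {e N : ℕ} {v w : Fin 3 →₀ ℕ} (h : SameClass e N v w) : SameClass e N w v :=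
  ⟨h.deg.symm, h.a.symm, h.b.symm, h.c.symm⟩

lemma SameClass.trans {e N : ℕ} {u v w : Fin 3 →₀ ℕ} (h : SameClass e N u v)
    (h' : SameClass e N v w) : SameClass e N u w :=
  ⟨h.deg.trans h'.deg, h.a.trans h'.a, h.b.trans h'.b, h.c.trans h'.c⟩

lemma SameClass.add {e N : ℕ} {v w v' w' : Fin 3 →₀ ℕ} (h : SameClass e N v w)
    (h' : SameClass e N v' w') : SameClass e N (v + v') (w + w') := by
  refine ⟨?_, ?_, ?_, ?_⟩
  · rw [tdeg_add, tdeg_add, h.deg, h'.deg]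
  · rw [wa_add, wa_add]; exact h.a.add h'.a
  · rw [wb_add, wb_add]; exact h.b.add h'.b
  · rw [wc_add, wc_add]; exact h.c.add h'.c

lemma SameClass.add_right_cancel {e N : ℕ} {v w v' w' : Fin 3 →₀ ℕ} (h' : SameClass e N v' w')
    (h : SameClass e N (v + v') (w + w')) : SameClass e N v w := by
  refine ⟨?_, ?_, ?_, ?_⟩
  · have := h.deg
    rw [tdeg_add, tdeg_add, h'.deg] at this; omega
  · have := h.a; rw [wa_add, wa_add] at this; exact h'.a.add_right_cancel this
  · have := h.b; rw [wb_add, wb_add] at this; exact h'.b.add_right_cancel this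
  · have := h.c; rw [wc_add, wc_add] at this; exact h'.c.add_right_cancel this

lemma div_eq_of_modEq {N a b : ℕ} (h : a ≡ b [MOD N]) :
    (N * (a / N) + b : ℤ) = N * (b / N) + a := by
  have h1 := Nat.div_add_mod a N
  have h2 := Nat.div_add_mod b N
  have h3 : a % N = b % N := h
  zify at h1 h2 h3
  rw [h3] at h1
  linarith

lemma SameClass.div_sum {e N : ℕ} (hN0 : 0 < N) {v w : Fin 3 →₀ ℕ} (h : SameClass e N v w) :
    wa e v / N + wb e v / N + wc e v / N = wa e w / N + wb e w / N + wc e w / N := by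
  have ha := div_eq_of_modEq h.a
  have hb := div_eq_of_modEq h.b
  have hc := div_eq_of_modEq h.c
  have hv := w_sum e v
  have hw := w_sum e w
  rw [h.deg, ← hw] at hv
  have hN0' : (N : ℤ) ≠ 0 := by exact_mod_cast hN0.ne'
  zify at hv ⊢
  apply mul_left_cancel₀ hN0'
  linarith

/-- In one class, the exponents of a monomial are, up to constants, those of `A^⌊a/N⌋ B^⌊b/N⌋ D^⌊c/N⌋`
for `A = x^e y`, `B = y^e z`, `D = z^e x`; so the image under `Phi` determines the monomial. -/
lemma SameClass.expo_eq {e N : ℕ} (hN : N + e = e * e + 1) (hN0 : 0 < N) {v w : Fin 3 →₀ ℕ}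
    (h : SameClass e N v w) :
    e * (wa e v / N) + wc e v / N + w 0 = v 0 + (e * (wa e w / N) + wc e w / N) ∧
    e * (wb e v / N) + wa e v / N + w 1 = v 1 + (e * (wb e w / N) + wa e w / N) ∧
    e * (wc e v / N) + wb e v / N + w 2 = v 2 + (e * (wc e w / N) + wb e w / N) := by
  have ha := div_eq_of_modEq h.a
  have hb := div_eq_of_modEq h.b
  have hc := div_eq_of_modEq h.c
  have hdeg := h.deg
  have hN0' : (N : ℤ) ≠ 0 := by exact_mod_cast hN0.ne'
  generalize hav : wa e v / N = av at *
  generalize hbv : wb e v / N = bv at *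
  generalize hcv : wc e v / N = cv at *
  generalize haw : wa e w / N = aw at *
  generalize hbw : wb e w / N = bw at *
  generalize hcw : wc e w / N = cw at *
  simp only [wa, wb, wc, tdeg] at hav hbv hcv haw hbw hcw ha hb hc hdeg
  zify at *
  rw [hav, haw] at ha
  rw [hbv, hbw] at hb
  rw [hcv, hcw] at hc
  have hN' : (N : ℤ) = e * e + 1 - e := by linarith
  refine ⟨?_, ?_, ?_⟩ <;> apply mul_left_cancel₀ hN0'
  · linear_combination e * ha + hc + (w 0 - v 0 : ℤ) * hN' + e * hdeg
  · linear_combination e * hb + ha + (w 1 - v 1 : ℤ) * hN' + e * hdeg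
  · linear_combination e * hc + hb + (w 2 - v 2 : ℤ) * hN' + e * hdeg

lemma pow_mul_div_pow {K : Type*} [Field K] {a b : K} (hb : b ≠ 0) (i j l : ℕ) :
    b ^ (i + j + l) * ((a / b) ^ i * (-(1 + a / b)) ^ l) = a ^ i * b ^ j * (-(a + b)) ^ l := by
  have e2 : -(1 + a / b) = -(a + b) / b := by field_simp; ring
  rw [e2, pow_add, pow_add, div_pow, div_pow]
  field_simp

/-- Homogenization: a linear relation between the polynomials `s^i u^l` yields the relation between
the forms `A^i B^j (-(A + B))^l` with `i + j + l` constant. -/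
lemma sum_eq_zero_of_sum_XU {ι : Type*} (s : Finset ι) (c : ι → k) (i j l : ι → ℕ) (L : ℕ)
    (hL : ∀ x ∈ s, i x + j x + l x = L) (A B : MvPolynomial (Fin 3) k) (hB : B ≠ 0)
    (h : ∑ x ∈ s, c x • (X ^ i x * linU k ^ l x : k[X]) = 0) :
    ∑ x ∈ s, c x • (A ^ i x * B ^ j x * (-(A + B)) ^ l x) = 0 := by
  let K := FractionRing (MvPolynomial (Fin 3) k)
  let ι' := algebraMap (MvPolynomial (Fin 3) k) K
  have hinj : Function.Injective ι' := IsFractionRing.injective _ _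
  have hB' : ι' B ≠ 0 := by rwa [Ne, map_eq_zero_iff ι' hinj]
  apply hinj
  have h1 := congrArg (fun g => ι' B ^ L * aeval (ι' A / ι' B) g) h
  simp only [map_zero, mul_zero, map_sum, map_smul, map_mul, map_pow, aeval_X, linU, map_neg,
    map_add, map_one] at h1
  rw [map_zero, ← h1, map_sum, Finset.mul_sum]
  refine Finset.sum_congr rfl fun x hx => ?_
  have e1 : ι' (c x • (A ^ i x * B ^ j x * (-(A + B)) ^ l x)) =
      c x • ι' (A ^ i x * B ^ j x * (-(A + B)) ^ l x) := by
    rw [Algebra.smul_def, Algebra.smul_def, map_mul]; rfl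
  rw [e1, mul_smul_comm, ← hL x hx, pow_mul_div_pow hB']
  simp only [map_mul, map_pow, map_neg, map_add]

/-- The kernel of `Phi` on polynomials of one degree and one class consists of multiples of
`triv e k`: up to monomial factors such a polynomial `f` is obtained from `Phi f` by substituting
`s = A`, `t = B`, `u = D`, and modulo `A + B + D = triv e k` one may replace `D` by `-(A + B)`. -/
lemma triv_dvd_of_Phi_eq_zero {e N r : ℕ} (hN : N + e = e * e + 1) (hN0 : 0 < N) (he : 0 < e)
    (f : MvPolynomial (Fin 3) k) (hr : ∀ v ∈ f.support, tdeg v = r)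
    (hf : ∀ v ∈ f.support, ∀ w ∈ f.support, SameClass e N v w)
    (h : Phi k e N r f = 0) : triv e k ∣ f := by
  by_cases hf0 : f = 0
  · simp [hf0]
  obtain ⟨w, hw⟩ : f.support.Nonempty := by
    rwa [Finset.nonempty_iff_ne_empty, Ne, MvPolynomial.support_eq_empty]
  rw [Phi_apply, Finset.sum_congr rfl
    (fun v hv => by rw [phi, if_pos (hr v hv)] : ∀ v ∈ f.support, f.coeff v • phi k e N r v =
      f.coeff v • (X ^ (wa e v / N) * linU k ^ (wc e v / N)))] at h
  let A : MvPolynomial (Fin 3) k := MvPolynomial.monomial (expo e 1 0) 1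
  let B : MvPolynomial (Fin 3) k := MvPolynomial.monomial (expo 0 e 1) 1
  let D : MvPolynomial (Fin 3) k := MvPolynomial.monomial (expo 1 0 e) 1
  have hABD : triv e k = A + B + D := triv_eq e
  have hB : B ≠ 0 := by simp [B, MvPolynomial.monomial_eq_zero]
  have h1 := sum_eq_zero_of_sum_XU f.support (fun v => f.coeff v) (fun v => wa e v / N)
    (fun v => wb e v / N) (fun v => wc e v / N) _
    (fun v hv => (hf v hv w hw).div_sum hN0) A B hB h
  have h2 : triv e k ∣ ∑ v ∈ f.support,
      f.coeff v • (A ^ (wa e v / N) * B ^ (wb e v / N) * D ^ (wc e v / N)) := by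
    rw [← sub_zero (∑ v ∈ f.support,
      f.coeff v • (A ^ (wa e v / N) * B ^ (wb e v / N) * D ^ (wc e v / N))), ← h1,
      ← Finset.sum_sub_distrib]
    refine Finset.dvd_sum fun v _ => ?_
    rw [← smul_sub, ← mul_sub]
    rw [MvPolynomial.smul_eq_C_mul]
    refine Dvd.dvd.mul_left (Dvd.dvd.mul_left ?_ _) _
    have := sub_dvd_pow_sub_pow D (-(A + B)) (wc e v / N)
    rwa [show D - -(A + B) = triv e k by rw [hABD]; ring] at this
  have h3 : (∑ v ∈ f.support,
      f.coeff v • (A ^ (wa e v / N) * B ^ (wb e v / N) * D ^ (wc e v / N))) *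
        MvPolynomial.monomial w 1 =
      f * (A ^ (wa e w / N) * B ^ (wb e w / N) * D ^ (wc e w / N)) := by
    have hmon : ∀ a b c, A ^ a * B ^ b * D ^ c =
        MvPolynomial.monomial (expo (e * a + c) (e * b + a) (e * c + b)) 1 := by
      intro a b c
      simp only [A, B, D, monomial_expo]; ring
    conv_rhs => rw [f.as_sum]
    rw [Finset.sum_mul, Finset.sum_mul]
    refine Finset.sum_congr rfl fun v hv => ?_
    rw [hmon, hmon, monomial_eq_smul v, smul_mul_assoc, smul_mul_assoc, MvPolynomial.monomial_mul,
      MvPolynomial.monomial_mul]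
    obtain ⟨x0, x1, x2⟩ := (hf v hv w hw).expo_eq hN hN0
    congr 3
    ext i; fin_cases i
    · simpa using x0
    · simpa using x1
    · simpa using x2
  have h4 : triv e k ∣ f * (A ^ (wa e w / N) * B ^ (wb e w / N) * D ^ (wc e w / N)) :=
    h3 ▸ h2.mul_right _
  refine IsRelPrime.dvd_of_dvd_mul_right ?_ h4
  refine IsRelPrime.symm ?_
  exact ((isRelPrime_monomial_triv he _).pow_left.mul_left
    (isRelPrime_monomial_triv he _).pow_left).mul_left (isRelPrime_monomial_triv he _).pow_left

end

/-! ### The upper bound by duality -/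

section
variable {k : Type} [Field k]

/-- The part of `f` supported on the exponent vectors satisfying `S`. -/
noncomputable def part (S : (Fin 3 →₀ ℕ) → Prop) (f : MvPolynomial (Fin 3) k) :
    MvPolynomial (Fin 3) k :=
  open Classical in ∑ v ∈ f.support with S v, MvPolynomial.monomial v (f.coeff v)

lemma coeff_part (S : (Fin 3 →₀ ℕ) → Prop) [DecidablePred S] (f : MvPolynomial (Fin 3) k)
    (w : Fin 3 →₀ ℕ) : (part S f).coeff w = if S w then f.coeff w else 0 := by
  classical
  rw [part, MvPolynomial.coeff_sum]
  simp only [MvPolynomial.coeff_monomial, Finset.sum_ite_eq', Finset.mem_filter,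
    MvPolynomial.mem_support_iff]
  split_ifs <;> simp_all

lemma mem_support_part {S : (Fin 3 →₀ ℕ) → Prop} {f : MvPolynomial (Fin 3) k}
    {w : Fin 3 →₀ ℕ} (h : w ∈ (part S f).support) : w ∈ f.support ∧ S w := by
  classical
  rw [MvPolynomial.mem_support_iff, coeff_part] at h
  rw [MvPolynomial.mem_support_iff]
  by_cases hS : S w
  · simpa [hS] using h
  · simp [hS] at h

lemma X_pow_dvd_of_support {q : ℕ} {i : Fin 3} {f : MvPolynomial (Fin 3) k}
    (h : ∀ v ∈ f.support, q ≤ v i) : (MvPolynomial.X i : MvPolynomial (Fin 3) k) ^ q ∣ f := by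
  rw [f.as_sum]
  refine Finset.dvd_sum fun v hv => ?_
  refine ⟨MvPolynomial.monomial (v - Finsupp.single i q) (f.coeff v), ?_⟩
  rw [MvPolynomial.X_pow_eq_monomial, MvPolynomial.monomial_mul, one_mul, add_tsub_cancel_of_le]
  exact Finsupp.single_le_iff.2 (h v hv)

lemma coeff_eq_zero_of_X_pow_dvd {q : ℕ} {i : Fin 3} {f : MvPolynomial (Fin 3) k}
    (h : (MvPolynomial.X i : MvPolynomial (Fin 3) k) ^ q ∣ f) {v : Fin 3 →₀ ℕ} (hv : v i < q) :
    f.coeff v = 0 := by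
  classical
  obtain ⟨g, rfl⟩ := h
  rw [MvPolynomial.X_pow_eq_monomial, MvPolynomial.coeff_monomial_mul', if_neg]
  rw [Finsupp.single_le_iff]; omega

lemma monomial_mem_Jq {e q : ℕ} {v : Fin 3 →₀ ℕ} {i : Fin 3} (h : q ≤ v i) :
    MvPolynomial.monomial v (1 : k) ∈ Jq k e q := by
  classical
  have h1 : (MvPolynomial.X i : MvPolynomial (Fin 3) k) ^ q ∣ MvPolynomial.monomial v (1 : k) :=
    X_pow_dvd_of_support fun w hw => by
      have := MvPolynomial.support_monomial_subset hw
      rw [Finset.mem_singleton] at this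
      rwa [this]
  refine Ideal.mem_of_dvd _ h1 (Ideal.subset_span ?_)
  fin_cases i <;> simp

/-- If the parts of a relation `Φ(f₀ + f₁ + f₂) = 0` are supported on multiples of `x^q`, `y^q` and
`z^q` respectively, in one degree and one class, then each of them is a multiple of `triv e k`. -/
lemma BasicSyzygy.triv_dvd_parts {p n t j w : ℕ} [Fact p.Prime] [CharP k p] {P Q R : k[X]}
    (hs : BasicSyzygy k n t P Q R) (hw : w = p ^ j) {e N q r l : ℕ} (hN : N + e = e * e + 1)
    (hN0 : 0 < N) (he : 0 < e) (hl : l = (e + 1) * r / N)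
    (hl₁ : l < (n + t) * w + 3 * max (q / N) (e * q / N - n * w))
    (hl₂ : l + (n + t) * w < 3 * min (e * q / N) (q / N + n * w))
    (f : Fin 3 → MvPolynomial (Fin 3) k) (hr : ∀ i, ∀ v ∈ (f i).support, tdeg v = r)
    (hc : ∀ i, ∀ v ∈ (f i).support, ∀ w ∈ (f i).support, SameClass e N v w)
    (hq : ∀ i, ∀ v ∈ (f i).support, q ≤ v i)
    (hsum : Phi k e N r (f 0) + Phi k e N r (f 1) + Phi k e N r (f 2) = 0) (i : Fin 3) :
    triv e k ∣ f i := by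
  have hqi : q / N ≤ e * q / N := Nat.div_le_div_right (Nat.le_mul_of_pos_left q he)
  have hphi : ∀ i, Phi k e N r (f i) =
      ∑ v ∈ (f i).support, (f i).coeff v • (X ^ (wa e v / N) * linU k ^ (wc e v / N)) := by
    intro i
    rw [Phi_apply]
    exact Finset.sum_congr rfl fun v hv => by rw [phi, if_pos (hr i v hv)]
  have hb : ∀ i, ∀ v ∈ (f i).support, wa e v / N + wb e v / N + wc e v / N ≤ l := by
    intro i v hv
    have := div_sum_le (e := e) (N := N) v
    rwa [hr i v hv, ← hl] at this
  -- a degree bound from a lower bound on the exponent of `t`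
  have hdeg : ∀ i (m : ℕ), (∀ v ∈ (f i).support, m ≤ wb e v / N) → Phi k e N r (f i) ≠ 0 →
      (Phi k e N r (f i)).natDegree + m ≤ l := by
    intro i m hm h0
    have hne : (f i).support.Nonempty := by
      rw [Finset.nonempty_iff_ne_empty]
      intro h
      rw [hphi, h, Finset.sum_empty] at h0
      exact h0 rfl
    obtain ⟨v, hv⟩ := hne
    have h1 := hm v hv
    have h2 := hb i v hv
    have h3 : (Phi k e N r (f i)).natDegree ≤ l - m := by
      rw [hphi]
      refine natDegree_sum_le_of_forall_le _ _ fun v hv => ?_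
      refine (natDegree_smul_le _ _).trans ?_
      rw [natDegree_XU]
      have h1 := hm v hv
      have h2 := hb i v hv
      generalize wa e v / N = A at *
      generalize wb e v / N = B at *
      generalize wc e v / N = D at *
      omega
    generalize wa e v / N = A at *
    generalize wb e v / N = B at *
    generalize wc e v / N = D at *
    omega
  have hdvdX : ∀ i (m : ℕ), (∀ v ∈ (f i).support, m ≤ wa e v / N) →
      X ^ m ∣ Phi k e N r (f i) := by
    intro i m hm
    rw [hphi]
    refine Finset.dvd_sum fun v hv => ?_
    rw [smul_eq_C_mul]
    exact Dvd.dvd.mul_left ((pow_dvd_pow _ (hm v hv)).mul_right _) _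
  have hdvdU : ∀ i (m : ℕ), (∀ v ∈ (f i).support, m ≤ wc e v / N) →
      linU k ^ m ∣ Phi k e N r (f i) := by
    intro i m hm
    rw [hphi]
    refine Finset.dvd_sum fun v hv => ?_
    rw [smul_eq_C_mul]
    exact Dvd.dvd.mul_left ((pow_dvd_pow _ (hm v hv)).mul_left _) _
  obtain ⟨h0, h1, h2⟩ := hs.rigid hw hsum hqi
    (hdvdX 0 _ fun v hv => (div_bounds_zero (hq 0 v hv)).1)
    (hdvdU 0 _ fun v hv => (div_bounds_zero (hq 0 v hv)).2)
    (hdvdX 1 _ fun v hv => (div_bounds_one (hq 1 v hv)).2)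
    (hdeg 1 _ fun v hv => (div_bounds_one (hq 1 v hv)).1)
    (hdvdU 2 _ fun v hv => (div_bounds_two (hq 2 v hv)).1)
    (hdeg 2 _ fun v hv => (div_bounds_two (hq 2 v hv)).2) hl₁ hl₂
  refine triv_dvd_of_Phi_eq_zero hN hN0 he (f i) (hr i) (hc i) ?_
  fin_cases i <;> assumption

/-- The upper bound for the `F`-threshold, by Macaulay duality: a linear functional vanishing on
`(x^q, y^q, z^q, h)` but not on a given monomial of degree `r` is encoded by a polynomial `u` with
exponents `< q`, whose support may be cut down to one class, such that `h u ∈ (x^q, y^q, z^q)`. The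
three parts of `h u` are then multiples of `h`, which forces `u ∈ (x^q, y^q, z^q)`. As the exponents
of `u` are `< q`, the coefficient of `u` dual to the given monomial vanishes, a contradiction. -/
lemma BasicSyzygy.upper_bound {p n t j w : ℕ} [Fact p.Prime] [CharP k p] {P Q R : k[X]}
    (hs : BasicSyzygy k n t P Q R) (hw : w = p ^ j) {e N q r l : ℕ} (hN : N + e = e * e + 1)
    (hN0 : 0 < N) (he : 0 < e) (hq0 : 0 < q)
    (hl : l = (e + 1) * (3 * (q - 1) + (e + 1) - r) / N)
    (hl₁ : l < (n + t) * w + 3 * max (q / N) (e * q / N - n * w))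
    (hl₂ : l + (n + t) * w < 3 * min (e * q / N) (q / N + n * w))
    (v₀ : Fin 3 →₀ ℕ) (hv₀ : tdeg v₀ = r) : MvPolynomial.monomial v₀ (1 : k) ∈ Jq k e q := by
  classical
  by_contra hmem
  let J : Submodule k (MvPolynomial (Fin 3) k) := (Jq k e q).restrictScalars k
  obtain ⟨φ, hφ, hJ⟩ := Submodule.exists_le_ker_of_notMem (p := J) hmem
  have hφJ : ∀ f ∈ Jq k e q, φ f = 0 := fun f hf => hJ hf
  set top : Fin 3 →₀ ℕ := expo (q - 1) (q - 1) (q - 1) with htop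
  have le_top : ∀ v : Fin 3 →₀ ℕ, v ≤ top ↔ ∀ i, v i < q := by
    intro v
    have htopi : ∀ i, top i = q - 1 := by intro i; fin_cases i <;> simp [htop]
    rw [Finsupp.le_def]
    refine forall_congr' fun i => ?_
    rw [htopi]; omega
  have hφ_top : ∀ v, ¬ v ≤ top → φ (MvPolynomial.monomial v 1) = 0 := by
    intro v hv
    rw [le_top] at hv
    push Not at hv
    obtain ⟨i, hi⟩ := hv
    exact hφJ _ (monomial_mem_Jq hi)
  have hv₀top : v₀ ≤ top := by
    by_contra h
    exact hφ (hφ_top _ h)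
  -- the polynomial dual to the functional, restricted to one class
  let u : MvPolynomial (Fin 3) k := ∑ μ ∈ Finset.Iic top, MvPolynomial.monomial μ
    (if SameClass e N (top - μ) v₀ then φ (MvPolynomial.monomial (top - μ) 1) else 0)
  have hu : ∀ μ, u.coeff μ = if μ ≤ top ∧ SameClass e N (top - μ) v₀ then
      φ (MvPolynomial.monomial (top - μ) 1) else 0 := by
    intro μ
    simp only [u, MvPolynomial.coeff_sum, MvPolynomial.coeff_monomial, Finset.sum_ite_eq',
      Finset.mem_Iic]
    rw [← ite_and]
  let δ : Fin 3 → (Fin 3 →₀ ℕ) := ![expo e 1 0, expo 0 e 1, expo 1 0 e]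
  have hmod : e * e + 1 ≡ e [MOD N] := by rw [← hN]; simp [Nat.ModEq]
  have hδ : ∀ i j, SameClass e N (δ i) (δ j) := by
    have h0 : ∀ i, SameClass e N (δ i) (δ 0) := by
      intro i
      fin_cases i
      · exact SameClass.refl _ _ _
      · refine ⟨?_, ?_, ?_, ?_⟩ <;> simp [δ, tdeg, wa, wb, wc]
        · exact hmod.symm
        · exact hmod
        · rfl
      · refine ⟨?_, ?_, ?_, ?_⟩ <;> simp [δ, tdeg, wa, wb, wc]
        · ring
        · exact hmod.symm
        · rfl
        · exact hmod
    exact fun i j => (h0 i).trans (h0 j).symm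
  have htriv : triv e k = ∑ i, MvPolynomial.monomial (δ i) 1 := by
    rw [triv_eq, Fin.sum_univ_three]; rfl
  have hcoeff : ∀ ν, (triv e k * u).coeff ν = ∑ i, if δ i ≤ ν then u.coeff (ν - δ i) else 0 := by
    intro ν
    rw [htriv, Finset.sum_mul, MvPolynomial.coeff_sum]
    refine Finset.sum_congr rfl fun i _ => ?_
    rw [MvPolynomial.coeff_monomial_mul']; simp
  have hzero : ∀ ν ≤ top, (triv e k * u).coeff ν = 0 := by
    intro ν hν
    have h1 : ∀ i, (if δ i ≤ ν then u.coeff (ν - δ i) else 0) =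
        if SameClass e N (top - ν + δ 0) v₀ then
          φ (MvPolynomial.monomial (top - ν + δ i) 1) else 0 := by
      intro i
      have hcl : SameClass e N (top - ν + δ 0) v₀ ↔ SameClass e N (top - ν + δ i) v₀ :=
        ⟨fun h => ((SameClass.refl _ _ _).add (hδ i 0)).trans h,
          fun h => ((SameClass.refl _ _ _).add (hδ 0 i)).trans h⟩
      rw [hcl]
      by_cases hi : δ i ≤ ν
      · have e1 : top - (ν - δ i) = top - ν + δ i := by
          ext j
          have a1 := hν j
          have a2 := hi j
          simp only [Finsupp.tsub_apply, Finsupp.add_apply]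
          omega
        rw [if_pos hi, hu, e1]
        have : ν - δ i ≤ top := tsub_le_self.trans hν
        simp [this]
      · rw [if_neg hi, hφ_top, ite_self]
        intro hle
        apply hi
        intro j
        have a1 := hle j
        have a2 := hν j
        simp only [Finsupp.tsub_apply, Finsupp.add_apply] at a1
        omega
    rw [hcoeff, Finset.sum_congr rfl fun i _ => h1 i]
    split_ifs
    · rw [← map_sum]
      apply hφJ
      have : ∑ i, MvPolynomial.monomial (top - ν + δ i) (1 : k) =
          MvPolynomial.monomial (top - ν) 1 * triv e k := by
        rw [htriv, Finset.mul_sum]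
        exact Finset.sum_congr rfl fun i _ => by rw [MvPolynomial.monomial_mul, one_mul]
      rw [this]
      exact Ideal.mul_mem_left _ _ (Ideal.subset_span (by simp))
    · simp
  have hsupp : ∀ ν ∈ (triv e k * u).support, ¬ ν ≤ top ∧
      SameClass e N (ν + v₀) (top + δ 0) := by
    intro ν hν
    rw [MvPolynomial.mem_support_iff] at hν
    refine ⟨fun h => hν (hzero ν h), ?_⟩
    rw [hcoeff] at hν
    obtain ⟨i, -, hi⟩ := Finset.exists_ne_zero_of_sum_ne_zero hν
    by_cases hle : δ i ≤ ν
    swap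
    · simp [hle] at hi
    rw [if_pos hle, hu] at hi
    by_cases hcl : ν - δ i ≤ top ∧ SameClass e N (top - (ν - δ i)) v₀
    swap
    · rw [if_neg hcl] at hi
      exact absurd rfl hi
    obtain ⟨h1, h2⟩ := hcl
    have e1 : ν + (top - (ν - δ i)) = top + δ i := by
      ext j
      have a1 := h1 j
      have a2 := hle j
      simp only [Finsupp.tsub_apply, Finsupp.add_apply] at a1 ⊢
      omega
    have h3 : SameClass e N (ν + v₀) (ν + (top - (ν - δ i))) :=
      (SameClass.refl _ _ _).add h2.symm
    rw [e1] at h3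
    exact h3.trans ((SameClass.refl _ _ _).add (hδ i 0))
  have hsame : ∀ ν ∈ (triv e k * u).support, ∀ ν' ∈ (triv e k * u).support,
      SameClass e N ν ν' := fun ν hν ν' hν' =>
    (SameClass.refl e N v₀).add_right_cancel ((hsupp ν hν).2.trans (hsupp ν' hν').2.symm)
  have hdeg : ∀ ν ∈ (triv e k * u).support, tdeg ν = 3 * (q - 1) + (e + 1) - r := by
    intro ν hν
    have h1 := (hsupp ν hν).2.deg
    rw [tdeg_add, tdeg_add, hv₀] at h1
    have h2 : tdeg top = 3 * (q - 1) := by simp [tdeg, htop]; ring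
    have h3 : tdeg (δ 0) = e + 1 := by simp [tdeg, δ]
    omega
  let f : Fin 3 → MvPolynomial (Fin 3) k := ![part (fun v => q ≤ v 0) (triv e k * u),
    part (fun v => v 0 < q ∧ q ≤ v 1) (triv e k * u),
    part (fun v => v 0 < q ∧ v 1 < q) (triv e k * u)]
  have hfs : ∀ i, ∀ v ∈ (f i).support, v ∈ (triv e k * u).support := by
    intro i v hv
    fin_cases i <;> exact (mem_support_part hv).1
  have hfq : ∀ i, ∀ v ∈ (f i).support, q ≤ v i := by
    intro i v hv
    have h1 := (hsupp v (hfs i v hv)).1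
    rw [le_top] at h1
    fin_cases i
    · exact (mem_support_part hv).2
    · exact (mem_support_part hv).2.2
    · have h2 := (mem_support_part hv).2
      by_contra h3
      apply h1
      intro i
      fin_cases i
      · exact h2.1
      · exact h2.2
      · exact not_le.1 h3
  have hfsum : f 0 + f 1 + f 2 = triv e k * u := by
    ext v
    simp only [f, Matrix.cons_val_zero, Matrix.cons_val_one, Matrix.cons_val, MvPolynomial.coeff_add, coeff_part]
    by_cases h0 : q ≤ v 0
    · simp [h0, not_lt.2 h0]
    · by_cases h1 : q ≤ v 1
      · simp [h0, h1, not_lt.2 h1, not_le.1 h0]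
      · simp [h0, h1, not_le.1 h1, not_le.1 h0]
  have hdvd := hs.triv_dvd_parts hw hN hN0 he hl hl₁ hl₂ f
    (fun i v hv => hdeg v (hfs i v hv))
    (fun i v hv v' hv' => hsame v (hfs i v hv) v' (hfs i v' hv')) hfq (by
      rw [← map_add, ← map_add, hfsum, mul_comm (triv e k), Phi_mul_triv hN hN0])
  choose g hg using hdvd
  have hgq : ∀ i, (MvPolynomial.X i : MvPolynomial (Fin 3) k) ^ q ∣ g i := fun i =>
    (isRelPrime_X_pow_triv he i q).dvd_of_dvd_mul_left (hg i ▸ X_pow_dvd_of_support (hfq i))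
  have hug : u = g 0 + g 1 + g 2 := by
    apply mul_left_cancel₀ (triv_ne_zero (k := k) he)
    rw [← hfsum, hg 0, hg 1, hg 2]; ring
  have hlt : ∀ i, (top - v₀) i < q := (le_top _).1 tsub_le_self
  have h1 : u.coeff (top - v₀) = 0 := by
    rw [hug, MvPolynomial.coeff_add, MvPolynomial.coeff_add,
      coeff_eq_zero_of_X_pow_dvd (hgq 0) (hlt 0), coeff_eq_zero_of_X_pow_dvd (hgq 1) (hlt 1),
      coeff_eq_zero_of_X_pow_dvd (hgq 2) (hlt 2), add_zero, add_zero]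
  rw [hu, tsub_tsub_cancel_of_le hv₀top, if_pos ⟨tsub_le_self, SameClass.refl _ _ _⟩] at h1
  exact hφ h1

end

/-! ### Explicit bounds -/

section arithmetic

/-- The value of the bound `hl₁` in `BasicSyzygy.rigid`, for `i = ⌊eq/N⌋`, `q₁ = ⌊q/N⌋` and
`n w = (e - 1) (q ∓ 2 w) / N`. The maximum is bounded below by its second argument for the sign `-`
and by its first for the sign `+`. Note that `e² - 7e + 7 = d² - 9d + 15` for `d = e + 1`. -/
lemma arith_max {e N n t w q i q₁ : ℕ} (hN : N + e = e * e + 1) (hnt : n = 2 * t + 1)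
    (hi : e * q < N * (i + 1)) (hq : q < N * (q₁ + 1))
    (hnw : (N * (n * w) : ℤ) = (e - 1) * (q - 2 * w) ∨ (N * (n * w) : ℤ) = (e - 1) * (q + 2 * w)) :
    (3 * (e + 1) * q - (e * e - 7 * e + 7) * w - 6 * N : ℤ) ≤
      2 * N * ((n + t) * w + 3 * max q₁ (i - n * w) : ℕ) := by
  have h1 : (q₁ : ℤ) ≤ (max q₁ (i - n * w) : ℕ) := by exact_mod_cast le_max_left _ _
  have h2 : (i : ℤ) - n * w ≤ (max q₁ (i - n * w) : ℕ) := by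
    have : i ≤ max q₁ (i - n * w) + n * w := by omega
    zify at this; push_cast; linarith
  have ht : 2 * (t * w : ℤ) = n * w - w := by rw [hnt]; push_cast; ring
  have hN' : (N : ℤ) = e * e + 1 - e := by zify at hN; linarith
  zify at hi hq
  generalize max q₁ (i - n * w) = M at *
  push_cast
  have hN0 : (0 : ℤ) ≤ N := by positivity
  have e0 : 2 * (N : ℤ) * ((n + t) * w + 3 * M) = 3 * (N * (n * w)) - N * w + 6 * (N * M) := by
    linear_combination N * ht
  rw [e0]
  rcases hnw with h | h
  · have := mul_le_mul_of_nonneg_left h2 hN0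
    rw [mul_sub, h] at this
    rw [h]
    have e2 : (N * w : ℤ) = (e * e + 1 - e) * w := by rw [hN']
    linarith
  · have := mul_le_mul_of_nonneg_left h1 hN0
    rw [h]
    have e2 : (N * w : ℤ) = (e * e + 1 - e) * w := by rw [hN']
    linarith

/-- The value of the bound common to `hl₂` in `BasicSyzygy.rigid` and
`BasicSyzygy.le_of_surjective`, in the situation of `arith_max`. -/
lemma arith_min {e N n t w q i q₁ : ℕ} (hN : N + e = e * e + 1) (he : 1 ≤ e) (hnt : n = 2 * t + 1)
    (hi : e * q < N * (i + 1)) (hq : q < N * (q₁ + 1))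
    (hnw : (N * (n * w) : ℤ) = (e - 1) * (q - 2 * w) ∨ (N * (n * w) : ℤ) = (e - 1) * (q + 2 * w)) :
    (3 * (e + 1) * q + (e * e - 7 * e + 7) * w - 6 * N + 2 * N * ((n + t) * w : ℕ) : ℤ) ≤
      2 * N * (3 * min i (q₁ + n * w) : ℕ) := by
  have ht : 2 * (t * w : ℤ) = n * w - w := by rw [hnt]; push_cast; ring
  have hN' : (N : ℤ) = e * e + 1 - e := by zify at hN; linarith
  have e2 : (N * w : ℤ) = (e * e + 1 - e) * w := by rw [hN']
  have he' : (0 : ℤ) ≤ (e - 1) * w := by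
    have : (1 : ℤ) ≤ e := by exact_mod_cast he
    have : (0 : ℤ) ≤ e - 1 := by linarith
    positivity
  zify at hi hq
  have e0 : 2 * (N : ℤ) * ((n + t) * w) = 3 * (N * (n * w)) - N * w := by
    linear_combination N * ht
  rcases min_choice i (q₁ + n * w) with h | h <;> rw [h] <;> push_cast <;> rw [e0] <;>
    rcases hnw with h | h <;> rw [h]
  · linarith
  · linarith
  · have : (N * (q₁ + n * w) : ℤ) = N * q₁ + (e - 1) * (q - 2 * w) := by rw [mul_add, h]
    linarith
  · have : (N * (q₁ + n * w) : ℤ) = N * q₁ + (e - 1) * (q + 2 * w) := by rw [mul_add, h]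
    linarith

end arithmetic

section
variable {k : Type} [Field k]

/-- The upper bound in explicit form: `2 d r ≥ 3 d q + (d² - 9d + 15) w + C` suffices, where
`d = e + 1`. -/
lemma BasicSyzygy.mem_Jq_of_le {p n t j w : ℕ} [Fact p.Prime] [CharP k p] {P Q R : k[X]}
    (hs : BasicSyzygy k n t P Q R) (hw : w = p ^ j) (hnt : n = 2 * t + 1)
    {e N q r : ℕ} (hN : N + e = e * e + 1) (hN0 : 0 < N) (he : 6 ≤ e) (hq0 : 0 < q)
    (hnw : (N * (n * w) : ℤ) = (e - 1) * (q - 2 * w) ∨ (N * (n * w) : ℤ) = (e - 1) * (q + 2 * w))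
    (hr : (3 * (e + 1) * q + (e * e - 7 * e + 7) * w + (2 * (e + 1) * (e + 1) + 6 * N) : ℤ) ≤
      2 * (e + 1) * r)
    (v : Fin 3 →₀ ℕ) (hv : tdeg v = r) : MvPolynomial.monomial v (1 : k) ∈ Jq k e q := by
  by_cases hr3 : 3 * (q - 1) < r
  · have : q ≤ v 0 ∨ q ≤ v 1 ∨ q ≤ v 2 := by
      by_contra! h
      simp only [tdeg] at hv; omega
    rcases this with h | h | h <;> exact monomial_mem_Jq h
  have hi : e * q < N * (e * q / N + 1) := Nat.lt_mul_div_succ _ hN0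
  have hq : q < N * (q / N + 1) := Nat.lt_mul_div_succ _ hN0
  have hmax := arith_max hN hnt hi hq hnw
  have hmin := arith_min hN (by omega) hnt hi hq hnw
  obtain ⟨l, hl⟩ : ∃ l, l = (e + 1) * (3 * (q - 1) + (e + 1) - r) / N := ⟨_, rfl⟩
  have hl' : N * l ≤ (e + 1) * (3 * (q - 1) + (e + 1) - r) := hl ▸ Nat.mul_div_le _ _
  have hN2 : (0 : ℤ) < 2 * N := by positivity
  have hlz : (2 * N * l : ℤ) < 3 * (e + 1) * q - (e * e - 7 * e + 7) * w - 6 * N := by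
    have h1 : ((3 * (q - 1) + (e + 1) - r : ℕ) : ℤ) = 3 * (q - 1) + (e + 1) - r := by omega
    zify at hl'
    rw [h1] at hl'
    nlinarith
  have hgap : (0 : ℤ) ≤ (e * e - 7 * e + 7) * w := by
    have : (6 : ℤ) ≤ e := by exact_mod_cast he
    have : (0 : ℤ) ≤ e * e - 7 * e + 7 := by nlinarith
    positivity
  refine hs.upper_bound hw hN hN0 (by omega) hq0 hl ?_ ?_ v hv
  · have := hlz.trans_le hmax
    exact_mod_cast lt_of_mul_lt_mul_left this hN2.le
  · have : (2 * N * (l + (n + t) * w : ℕ) : ℤ) <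
        2 * N * (3 * min (e * q / N) (q / N + n * w) : ℕ) := by
      push_cast at hmin ⊢
      linarith
    exact_mod_cast lt_of_mul_lt_mul_left this hN2.le

/-- The lower bound in explicit form: if `2 d (N λ)` is smaller than `3 d q + (d² - 9d + 15) w` by
more than a constant, where `d = e + 1`, then some monomial of degree `N λ` is not in `Jq k e q`. -/
lemma BasicSyzygy.exists_not_mem_Jq {p n t j w : ℕ} [Fact p.Prime] [CharP k p] {P Q R : k[X]}
    (hs : BasicSyzygy k n t P Q R) (hw : w = p ^ j) (hnt : n = 2 * t + 1)
    {e N q lam : ℕ} (hN : N + e = e * e + 1) (hN0 : 0 < N) (he : 6 ≤ e) (heven : Even e)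
    (hnw : (N * (n * w) : ℤ) = (e - 1) * (q - 2 * w) ∨ (N * (n * w) : ℤ) = (e - 1) * (q + 2 * w))
    (hlam : q ≤ N * lam)
    (hlam' : (2 * N * ((e + 1) * lam + (e + 1) + 1) : ℤ) <
      3 * (e + 1) * q + (e * e - 7 * e + 7) * w - 6 * N) :
    ∃ v : Fin 3 →₀ ℕ, tdeg v = N * lam ∧ MvPolynomial.monomial v (1 : k) ∉ Jq k e q := by
  by_contra! h
  have hi : e * q < N * (e * q / N + 1) := Nat.lt_mul_div_succ _ hN0
  have hq : q < N * (q / N + 1) := Nat.lt_mul_div_succ _ hN0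
  have hmin := arith_min hN (by omega) hnt hi hq hnw
  have hle : e * q / N + q / N ≤ (e + 1) * lam := by
    have h1 : N * (e * q / N) ≤ e * q := Nat.mul_div_le _ _
    have h2 : N * (q / N) ≤ q := Nat.mul_div_le _ _
    refine Nat.le_of_mul_le_mul_left ?_ hN0
    calc N * (e * q / N + q / N) ≤ (e + 1) * q := by rw [mul_add]; linarith
      _ ≤ (e + 1) * (N * lam) := Nat.mul_le_mul_left _ hlam
      _ = _ := by ring
  have h1 := hs.lower_bound hw hN hN0 heven hle h
  have h2 : (2 * N * (3 * min (e * q / N) (q / N + n * w) : ℕ) : ℤ) ≤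
      2 * N * ((n + t) * w + ((e + 1) * lam + (e + 1)) + 1 : ℕ) :=
    mul_le_mul_of_nonneg_left (by exact_mod_cast h1) (by positivity)
  push_cast at h2 hmin
  linarith

end

/-! ### Frobenius powers in the quotient ring -/

section
variable {k : Type} [Field k]

lemma map_idealOfVars (d : ℕ) :
    (MvPolynomial.idealOfVars (Fin 3) k).map (Ideal.Quotient.mk (Ideal.span {trivediPolynomial d k}))
      = trivediMaxIdeal d k := by
  rw [MvPolynomial.idealOfVars, Ideal.map_span, ← Set.range_comp]
  rfl

/-- The Frobenius power of `(x, y, z)` is generated by the powers of the three generators, since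
raising to the power `p ^ j` is additive. -/
lemma map_Jq (p d j : ℕ) [Fact p.Prime] [CharP k p] :
    (Jq k (d - 1) (p ^ j)).map (Ideal.Quotient.mk (Ideal.span {trivediPolynomial d k}))
      = frobeniusPower (trivediMaxIdeal d k) (p ^ j) := by
  apply le_antisymm
  · rw [Jq, Ideal.map_span]
    refine Ideal.span_le.2 ?_
    have key : ∀ i : Fin 3, (Ideal.Quotient.mk (Ideal.span {trivediPolynomial d k}))
        (MvPolynomial.X i ^ p ^ j) ∈ frobeniusPower (trivediMaxIdeal d k) (p ^ j) := fun i =>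
      Ideal.subset_span ⟨Ideal.Quotient.mk _ (MvPolynomial.X i), Ideal.subset_span ⟨i, rfl⟩,
        (map_pow _ _ _).symm⟩
    rintro _ ⟨f, hf, rfl⟩
    rcases hf with rfl | rfl | rfl | rfl
    · exact key 0
    · exact key 1
    · exact key 2
    · have : (Ideal.Quotient.mk (Ideal.span {trivediPolynomial d k})) (triv (d - 1) k) = 0 :=
        Ideal.Quotient.eq_zero_iff_mem.2 (Ideal.subset_span rfl)
      rw [this]
      exact Ideal.zero_mem _
  · refine Ideal.span_le.2 ?_
    rintro _ ⟨y, hy, rfl⟩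
    rw [← map_idealOfVars] at hy
    obtain ⟨f, hf, rfl⟩ := (Ideal.mem_map_iff_of_surjective _ Ideal.Quotient.mk_surjective).1 hy
    have hf' : f ^ p ^ j ∈ Jq k (d - 1) (p ^ j) := by
      have : CharP (MvPolynomial (Fin 3) k) p := inferInstance
      refine Submodule.span_induction (p := fun f _ => f ^ p ^ j ∈ Jq k (d - 1) (p ^ j))
        ?_ ?_ ?_ ?_ hf
      · rintro _ ⟨i, rfl⟩
        refine Ideal.subset_span ?_
        fin_cases i <;> simp
      · rw [zero_pow (pow_ne_zero _ (Fact.out : p.Prime).ne_zero)]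
        exact Ideal.zero_mem _
      · intro x y _ _ hx hy
        rw [add_pow_char_pow]
        exact Ideal.add_mem _ hx hy
      · intro a x _ hx
        rw [smul_eq_mul, mul_pow]
        exact Ideal.mul_mem_left _ _ hx
    have := Ideal.mem_map_of_mem (Ideal.Quotient.mk (Ideal.span {trivediPolynomial d k})) hf'
    rw [map_pow] at this
    exact this

/-- Containment of powers of the maximal ideal in its Frobenius powers, read off in the polynomial
ring. -/
lemma pow_le_frobeniusPower_iff (p d j r : ℕ) [Fact p.Prime] [CharP k p] :
    trivediMaxIdeal d k ^ r ≤ frobeniusPower (trivediMaxIdeal d k) (p ^ j) ↔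
      ∀ v : Fin 3 →₀ ℕ, tdeg v = r →
        MvPolynomial.monomial v (1 : k) ∈ Jq k (d - 1) (p ^ j) := by
  have hle : Ideal.span {trivediPolynomial d k} ≤ Jq k (d - 1) (p ^ j) := by
    refine Ideal.span_le.2 ?_
    rintro _ rfl
    exact Ideal.subset_span (by simp [triv, trivediPolynomial])
  have hdeg : ∀ v : Fin 3 →₀ ℕ, v.degree = tdeg v := fun v => by
    rw [Finsupp.degree_eq_sum, Fin.sum_univ_three, tdeg]
  have h1 : trivediMaxIdeal d k ^ r = (MvPolynomial.idealOfVars (Fin 3) k ^ r).map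
      (Ideal.Quotient.mk (Ideal.span {trivediPolynomial d k})) := by
    rw [Ideal.map_pow, map_idealOfVars]; rfl
  rw [← map_Jq, h1]
  refine Ideal.map_le_iff_le_comap.trans ?_
  rw [Ideal.comap_map_mk hle, MvPolynomial.pow_idealOfVars_eq_span, Ideal.span_le]
  constructor
  · intro h v hv
    exact h ⟨v, by simp [hdeg, hv], rfl⟩
  · rintro h _ ⟨v, hv, rfl⟩
    exact h v (by simpa [hdeg] using hv)
end

/-! ### Bounds for `ν` -/

/-- The numerical data attached to `d` and `p`: with `e = d - 1` and `N = d ^ 2 - 3 * d + 3`, the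
congruence gives `p ∓ 2 = m * N` with `m` odd, and `n = m * (e - 1)`. -/
lemma exists_params {d p : ℕ} (hd : 7 ≤ d) (hodd : Odd d) (hp : p.Prime) (hpd : d ^ 2 ≤ p)
    (hcong : (p : ZMod (d ^ 2 - 3 * d + 3)) = 2 ∨ (p : ZMod (d ^ 2 - 3 * d + 3)) = -2) :
    ∃ e N n t : ℕ, d = e + 1 ∧ N + e = e * e + 1 ∧ 0 < N ∧ 6 ≤ e ∧ Even e ∧ n = 2 * t + 1 ∧
      n + t < p ∧
      ((N * n : ℤ) = (e - 1) * (p - 2) ∨ (N * n : ℤ) = (e - 1) * (p + 2)) := by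
  obtain ⟨a, ha⟩ := hodd
  obtain ⟨e, rfl⟩ : ∃ e, d = e + 1 := ⟨d - 1, by omega⟩
  have hea : e = 2 * a := by omega
  have hNd : (e + 1) ^ 2 - 3 * (e + 1) + 3 = e * e + 1 - e := by
    have h1 : 6 * e ≤ e * e := Nat.mul_le_mul_right _ (by omega)
    have h2 : (e + 1) ^ 2 = e * e + 2 * e + 1 := by ring
    omega
  rw [hNd] at hcong
  have hN : (e * e + 1 - e) + e = e * e + 1 := by
    have h1 : 6 * e ≤ e * e := Nat.mul_le_mul_right _ (by omega)
    omega
  generalize e * e + 1 - e = N at hN hcong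
  have hN6 : 6 * e ≤ N + e := by nlinarith
  have hpp : e * e + 2 * e + 1 ≤ p := by nlinarith
  have hpodd : p % 2 = 1 := by
    rcases hp.eq_two_or_odd with h | h
    · omega
    · exact h
  have hNodd : Odd N := by
    have : Odd (N + e) := by rw [hN, hea]; exact ⟨2 * a * a, by ring⟩
    rcases Nat.even_or_odd N with h | h
    · exact absurd (h.add (⟨a, by omega⟩ : Even e)) (Nat.not_even_iff_odd.2 this)
    · exact h
  have he1 : Odd (e - 1) := ⟨a - 1, by omega⟩
  -- In both cases the quotient `m` is odd, and `6 * (e - 1) ≤ N` bounds `n = m * (e - 1)`.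
  have main : ∀ m s : ℕ, m * N = s → Odd s → s ≤ p + 2 →
      ((s : ℤ) = p - 2 ∨ (s : ℤ) = p + 2) →
      ∃ n t : ℕ, n = 2 * t + 1 ∧ n + t < p ∧
        ((N * n : ℤ) = (e - 1) * (p - 2) ∨ (N * n : ℤ) = (e - 1) * (p + 2)) := by
    intro m s hm hs hsp hsZ
    have hmodd : Odd m := Nat.Odd.of_mul_left (hm ▸ hs)
    obtain ⟨t, ht⟩ := hmodd.mul he1
    have hle : 6 * (m * (e - 1)) ≤ m * N := by
      have : 6 * (e - 1) ≤ N := by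
        have h1 : (e - 1) * 6 ≤ (e - 1) * e := Nat.mul_le_mul_left _ (by omega)
        have h2 : (e - 1) * e + e = e * e := by
          obtain ⟨f, rfl⟩ : ∃ f, e = f + 1 := ⟨e - 1, by omega⟩
          simp; ring
        omega
      calc 6 * (m * (e - 1)) = m * (6 * (e - 1)) := by ring
        _ ≤ m * N := Nat.mul_le_mul_left _ this
    refine ⟨m * (e - 1), t, ht, by omega, ?_⟩
    have hcast : ((m * (e - 1) : ℕ) : ℤ) = m * (e - 1) := by
      rw [Nat.cast_mul, Nat.cast_sub (by omega)]; simp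
    have hmZ : (m : ℤ) * N = s := by exact_mod_cast hm
    rw [hcast]
    rcases hsZ with h | h
    · left; rw [← h, ← hmZ]; ring
    · right; rw [← h, ← hmZ]; ring
  have hpodd' : Odd p := Nat.odd_iff.2 hpodd
  have key : ∃ n t : ℕ, n = 2 * t + 1 ∧ n + t < p ∧
        ((N * n : ℤ) = (e - 1) * (p - 2) ∨ (N * n : ℤ) = (e - 1) * (p + 2)) := by
    rcases hcong with h | h
    · have h1 : ((p - 2 : ℕ) : ZMod N) = 0 := by
        rw [Nat.cast_sub (by omega), h]; simp
      obtain ⟨m, hm⟩ := (ZMod.natCast_eq_zero_iff _ _).1 h1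
      refine main m (p - 2) (by rw [hm, mul_comm]) (Nat.odd_iff.2 (by omega)) (by omega) (Or.inl ?_)
      rw [Nat.cast_sub (by omega)]; simp
    · have h1 : ((p + 2 : ℕ) : ZMod N) = 0 := by
        rw [Nat.cast_add, h]; simp
      obtain ⟨m, hm⟩ := (ZMod.natCast_eq_zero_iff _ _).1 h1
      exact main m (p + 2) (by rw [hm, mul_comm]) (Nat.odd_iff.2 (by omega)) le_rfl
        (Or.inr (by push_cast; ring))
  obtain ⟨n, t, h1, h2, h3⟩ := key
  exact ⟨e, N, n, t, rfl, hN, by omega, by omega, ⟨a, by omega⟩, h1, h2, h3⟩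

section
variable {k : Type} [Field k]

/-- The function `ν` is determined up to a constant independent of `q = p ^ (j + 1)`. -/
lemma exists_nu_bounds {d p : ℕ} (hd : 7 ≤ d) (hodd : Odd d) (hp : p.Prime) (hpd : d ^ 2 ≤ p)
    (hcong : (p : ZMod (d ^ 2 - 3 * d + 3)) = 2 ∨ (p : ZMod (d ^ 2 - 3 * d + 3)) = -2)
    [CharP k p] : ∃ K : ℕ, ∀ j : ℕ, K ≤ p ^ (j + 1) →
      (2 * d * fthresholdNu (trivediMaxIdeal d k) (trivediMaxIdeal d k) (p ^ (j + 1)) : ℤ) ≤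
        3 * d * p ^ (j + 1) + (d ^ 2 - 9 * d + 15) * p ^ j + K ∧
      (3 * d * p ^ (j + 1) + (d ^ 2 - 9 * d + 15) * p ^ j - K : ℤ) ≤
        2 * d * fthresholdNu (trivediMaxIdeal d k) (trivediMaxIdeal d k) (p ^ (j + 1)) := by
  obtain ⟨e, N, n, t, rfl, hN, hN0, he, heven, hnt, hntp, hn⟩ :=
    exists_params hd hodd hp hpd hcong
  have : Fact p.Prime := ⟨hp⟩
  obtain ⟨P, Q, R, hs⟩ := exists_basicSyzygy (k := k) (p := p) n t hnt hntp
  refine ⟨6 * N + 2 * N * (e + 2) + 1 + 2 * (e + 1) * N + (2 * (e + 1) * (e + 1) + 6 * N),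
    fun j hj => ?_⟩
  have hq0 : 0 < p ^ (j + 1) := pow_pos hp.pos _
  have hqw : ((p ^ (j + 1) : ℕ) : ℤ) = p * (p ^ j : ℕ) := by push_cast; ring
  have hnw : (N * (n * (p ^ j : ℕ)) : ℤ) = (e - 1) * ((p ^ (j + 1) : ℕ) - 2 * (p ^ j : ℕ)) ∨
      (N * (n * (p ^ j : ℕ)) : ℤ) = (e - 1) * ((p ^ (j + 1) : ℕ) + 2 * (p ^ j : ℕ)) := by
    rw [hqw]
    rcases hn with h | h
    · left; linear_combination (p ^ j : ℕ) * h
    · right; linear_combination (p ^ j : ℕ) * h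
  have hlo := fun l : ℕ => hs.exists_not_mem_Jq (lam := l) rfl hnt hN hN0 he heven hnw
  have hup := fun r : ℕ => hs.mem_Jq_of_le (r := r) rfl hnt hN hN0 he hq0 hnw
  have hiff := pow_le_frobeniusPower_iff (k := k) p (e + 1) (j + 1)
  simp only [Nat.add_sub_cancel] at hiff
  have hgap : (0 : ℤ) ≤ e * e - 7 * e + 7 := by
    have : (6 : ℤ) ≤ e := by exact_mod_cast he
    nlinarith
  have hcq : ((p ^ (j + 1) : ℕ) : ℤ) = (p : ℤ) ^ (j + 1) := by push_cast; rfl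
  have hcw : ((p ^ j : ℕ) : ℤ) = (p : ℤ) ^ j := by push_cast; rfl
  have hg : ((e + 1 : ℕ) : ℤ) ^ 2 - 9 * ((e + 1 : ℕ) : ℤ) + 15 = e * e - 7 * e + 7 := by
    push_cast; ring
  rw [← hcq, ← hcw, hg]
  unfold fthresholdNu
  have hw0 : (0 : ℤ) ≤ (p ^ j : ℕ) := Int.natCast_nonneg _
  generalize p ^ (j + 1) = q at *
  generalize p ^ j = w at *
  set S := {r : ℕ | ¬ trivediMaxIdeal (e + 1) k ^ r ≤
    frobeniusPower (trivediMaxIdeal (e + 1) k) q} with hS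
  have hSup : ∀ r ∈ S, (2 * (e + 1) * r : ℤ) <
      3 * (e + 1) * q + (e * e - 7 * e + 7) * w + (2 * (e + 1) * (e + 1) + 6 * N) := by
    intro r hr
    by_contra! hcon
    exact hr ((hiff r).2 (hup r hcon))
  have hbdd : BddAbove S := by
    refine ⟨(3 * (e + 1) * q + (e * e - 7 * e + 7) * w +
      (2 * (e + 1) * (e + 1) + 6 * N) : ℤ).toNat, fun r hr => ?_⟩
    have h1 := hSup r hr
    have h2 : (r : ℤ) ≤ 2 * (e + 1) * r := by
      have : (0 : ℤ) ≤ e * r := by positivity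
      nlinarith
    omega
  have hgw : (0 : ℤ) ≤ (e * e - 7 * e + 7) * w := mul_nonneg hgap hw0
  generalize (e * e - 7 * e + 7 : ℤ) * w = G at *
  have hjZ : ((6 * N + 2 * N * (e + 2) + 1 + 2 * (e + 1) * N +
    (2 * (e + 1) * (e + 1) + 6 * N) : ℕ) : ℤ) ≤ q := by exact_mod_cast hj
  push_cast at hjZ ⊢
  have hN0' : (0 : ℤ) < N := by exact_mod_cast hN0
  have heZ : (0 : ℤ) ≤ e := by positivity
  have heN : (0 : ℤ) ≤ e * N := by positivity
  -- the largest `l` allowed by the lower bound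
  have hlow : ∃ l : ℕ, N * l ∈ S ∧
      (3 * (e + 1) * q + G - (6 * N + 2 * N * (e + 2) + 1) - 2 * (e + 1) * N : ℤ) ≤
        2 * (e + 1) * (N * l) := by
    set A : ℤ := 3 * (e + 1) * q + G - (6 * N + 2 * N * (e + 2) + 1) with hA
    have hD : (0 : ℤ) < 2 * (e + 1) * N := by positivity
    have heq : (0 : ℤ) ≤ e * q := by positivity
    have hA0 : 0 ≤ A := by nlinarith
    obtain ⟨l, hl⟩ := Int.eq_ofNat_of_zero_le (Int.ediv_nonneg hA0 hD.le)
    have h1 : 2 * (e + 1) * N * (l : ℤ) ≤ A := by rw [← hl]; exact Int.mul_ediv_self_le hD.ne'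
    have h2 : A < 2 * (e + 1) * N * (l : ℤ) + 2 * (e + 1) * N := by
      have := Int.lt_mul_ediv_self_add (x := A) hD
      rwa [hl] at this
    refine ⟨l, ?_, by linarith⟩
    have hql : q ≤ N * l := by
      have : (2 * (e + 1)) * (q : ℤ) ≤ 2 * (e + 1) * (N * l) := by nlinarith
      exact_mod_cast le_of_mul_le_mul_left this (by positivity)
    obtain ⟨v, hv, hv'⟩ := hlo l hql (by nlinarith)
    exact fun h => hv' ((hiff _).1 h v hv)
  obtain ⟨l, hlS, hl⟩ := hlow
  have hmem : sSup S ∈ S := Nat.sSup_mem ⟨_, hlS⟩ hbdd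
  constructor
  · have h1 := hSup _ hmem
    have h2 : (0 : ℤ) ≤ 6 * N + 2 * N * (e + 2) + 1 + 2 * (e + 1) * N := by positivity
    linarith
  · have h1 : ((N * l : ℕ) : ℤ) ≤ (sSup S : ℕ) := by exact_mod_cast le_csSup hbdd hlS
    push_cast at h1
    have h2 : 2 * (e + 1) * (N * l : ℤ) ≤ 2 * (e + 1) * (sSup S : ℕ) :=
      mul_le_mul_of_nonneg_left h1 (by positivity)
    have h3 : (0 : ℤ) ≤ 2 * (e + 1) * (e + 1) + 6 * N := by positivity
    linarith
end

/-! ### The denominator and the limit -/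

/-- The factor `p` does not cancel because `0 < d² - 9d + 15 < p`. -/
lemma dvd_den {d p : ℕ} (hd : 7 ≤ d) (hp : p.Prime) (hpd : d ^ 2 ≤ p) :
    p ∣ ((3 * (p : ℚ) * (d : ℚ) + (d : ℚ) ^ 2 - 9 * (d : ℚ) + 15) /
        (2 * (p : ℚ) * (d : ℚ)) : ℚ).den := by
  set c : ℚ := (3 * (p : ℚ) * (d : ℚ) + (d : ℚ) ^ 2 - 9 * (d : ℚ) + 15) /
        (2 * (p : ℚ) * (d : ℚ)) with hc
  have hp0 : (p : ℚ) ≠ 0 := by exact_mod_cast hp.ne_zero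
  have hd0 : (d : ℚ) ≠ 0 := by
    have : d ≠ 0 := by omega
    exact_mod_cast this
  have h1 : (c.num : ℚ) * (2 * p * d) =
      c.den * (3 * (p : ℚ) * (d : ℚ) + (d : ℚ) ^ 2 - 9 * (d : ℚ) + 15) := by
    have h2 : c * (2 * p * d) = 3 * (p : ℚ) * (d : ℚ) + (d : ℚ) ^ 2 - 9 * (d : ℚ) + 15 := by
      rw [hc]; field_simp
    rw [← h2, ← Rat.den_mul_eq_num]; ring
  have h2 : c.num * (2 * p * d) = c.den * (3 * (p : ℤ) * d + d ^ 2 - 9 * d + 15) := by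
    exact_mod_cast h1
  have hpZ : Prime (p : ℤ) := Nat.prime_iff_prime_int.1 hp
  have h3 : (p : ℤ) ∣ c.den * ((d : ℤ) ^ 2 - 9 * d + 15) :=
    ⟨c.num * (2 * d) - c.den * (3 * d), by linear_combination -h2⟩
  rcases hpZ.dvd_or_dvd h3 with h | h
  · exact_mod_cast h
  · exfalso
    have hdZ : (7 : ℤ) ≤ d := by exact_mod_cast hd
    have hpdZ : (d : ℤ) ^ 2 ≤ p := by exact_mod_cast hpd
    have := Int.le_of_dvd (by nlinarith) h
    nlinarith

lemma tendsto_of_bounds {d p K : ℕ} (hd : 0 < d) (hp : 1 < p) (nu : ℕ → ℕ)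
    (h : ∀ j : ℕ, K ≤ p ^ (j + 1) →
      (2 * d * nu (j + 1) : ℤ) ≤ 3 * d * p ^ (j + 1) + (d ^ 2 - 9 * d + 15) * p ^ j + K ∧
      (3 * d * p ^ (j + 1) + (d ^ 2 - 9 * d + 15) * p ^ j - K : ℤ) ≤ 2 * d * nu (j + 1)) :
    Filter.Tendsto (fun j => (nu j : ℝ) / (p : ℝ) ^ j) Filter.atTop
      (nhds ((3 * p * d + d ^ 2 - 9 * d + 15) / (2 * p * d))) := by
  have hd' : (0 : ℝ) < d := by exact_mod_cast hd
  have hp' : (1 : ℝ) < p := by exact_mod_cast hp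
  have hp0 : (0 : ℝ) < p := by linarith
  set c : ℝ := (3 * p * d + d ^ 2 - 9 * d + 15) / (2 * p * d) with hc
  rw [← Filter.tendsto_add_atTop_iff_nat 1]
  have hpow : Filter.Tendsto (fun j : ℕ => (p : ℝ) ^ (j + 1)) Filter.atTop Filter.atTop :=
    (tendsto_pow_atTop_atTop_of_one_lt hp').comp (Filter.tendsto_add_atTop_nat 1)
  have herr : Filter.Tendsto (fun j : ℕ => (K / (2 * d) : ℝ) / (p : ℝ) ^ (j + 1))
      Filter.atTop (nhds 0) := hpow.const_div_atTop _
  have hlarge : ∀ᶠ j : ℕ in Filter.atTop, (K : ℝ) ≤ (p : ℝ) ^ (j + 1) :=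
    hpow.eventually_ge_atTop _
  have hcq : ∀ j : ℕ, 2 * d * (c * (p : ℝ) ^ (j + 1)) =
      3 * d * p ^ (j + 1) + (d ^ 2 - 9 * d + 15) * p ^ j := fun j => by
    rw [hc, pow_succ]; field_simp; ring
  have hlo := (tendsto_const_nhds (x := c)).sub herr
  have hhi := (tendsto_const_nhds (x := c)).add herr
  rw [sub_zero] at hlo
  rw [add_zero] at hhi
  refine tendsto_of_tendsto_of_tendsto_of_le_of_le' hlo hhi ?_ ?_
  all_goals
    filter_upwards [hlarge] with j hj
    obtain ⟨h1, h2⟩ := h j (by exact_mod_cast hj)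
    have h1' : (2 * d * nu (j + 1) : ℝ) ≤
      3 * d * p ^ (j + 1) + (d ^ 2 - 9 * d + 15) * p ^ j + K := by exact_mod_cast h1
    have h2' : (3 * d * p ^ (j + 1) + (d ^ 2 - 9 * d + 15) * p ^ j - K : ℝ) ≤
      2 * d * nu (j + 1) := by exact_mod_cast h2
    rw [← hcq] at h1' h2'
    have hq : (0 : ℝ) < (p : ℝ) ^ (j + 1) := by positivity
    have hK : 2 * d * (K / (2 * d) : ℝ) = K := by field_simp
  · rw [le_div_iff₀ hq, sub_mul, div_mul_cancel₀ _ hq.ne']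
    refine le_of_mul_le_mul_left (a := (2 * d : ℝ)) ?_ (by positivity)
    linarith
  · rw [div_le_iff₀ hq, add_mul, div_mul_cancel₀ _ hq.ne']
    refine le_of_mul_le_mul_left (a := (2 * d : ℝ)) ?_ (by positivity)
    linarith

end Trivedi

/-- Remark 4.1, after [TrW, Example 6.9].  For odd `d ≥ 7` and a prime
`p ≥ d²` with `p ≡ ±2 (mod d² - 3d + 3)`, the `F`-threshold of the maximal ideal
`𝐦 = (x,y,z)` of `R_p = k[x,y,z]/(x^{d-1}y + y^{d-1}z + z^{d-1}x)` is
`c^𝐦(𝐦) = (3pd + d² - 9d + 15)/(2pd)`; in particular `p` divides the denominator of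
`c^𝐦(𝐦)` in lowest terms (but this denominator need not be a power of `p`). -/
theorem trivedi_example_fthreshold (d p : ℕ) (hd : 7 ≤ d) (hodd : Odd d)
    (hp : p.Prime) (hpd : d ^ 2 ≤ p)
    (hcong : (p : ZMod (d ^ 2 - 3 * d + 3)) = 2 ∨
      (p : ZMod (d ^ 2 - 3 * d + 3)) = -2)
    (k : Type) [Field k] [IsAlgClosed k] [CharP k p] :
    HasFThreshold p (trivediMaxIdeal d k) (trivediMaxIdeal d k)
      (((3 * (p : ℚ) * (d : ℚ) + (d : ℚ) ^ 2 - 9 * (d : ℚ) + 15) /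
        (2 * (p : ℚ) * (d : ℚ)) : ℚ) : ℝ) ∧
    p ∣ ((3 * (p : ℚ) * (d : ℚ) + (d : ℚ) ^ 2 - 9 * (d : ℚ) + 15) /
        (2 * (p : ℚ) * (d : ℚ)) : ℚ).den := by
  obtain ⟨K, hK⟩ := Trivedi.exists_nu_bounds (k := k) hd hodd hp hpd hcong
  refine ⟨?_, Trivedi.dvd_den hd hp hpd⟩
  have h := Trivedi.tendsto_of_bounds (by omega) hp.one_lt
    (fun j => fthresholdNu (trivediMaxIdeal d k) (trivediMaxIdeal d k) (p ^ j)) hK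
  unfold HasFThreshold
  push_cast
  exact h
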